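/- For every integer d ≥ 1 there exists a constant C_d > 0, depending only on d, such that for every integer n ≥ 1, every degree-d polynomial threshold function f : {-1,1}^n → {-1,1} satisfies BSA[f] ≤ C_d · (log(e·n))^{C_d}. -/

import Mathlib

open Finset
open scoped Classical

/-- The embedding of `Bool` into `{-1, 1} ⊆ ℝ`. -/
noncomputable def chi (b : Bool) : ℝ := if b then 1 else -1

/-- Flip the `i`-th coordinate of a point of the Boolean cube. -/
def flipAt {n : ℕ} (x : Fin n → Bool) (i : Fin n) : Fin n → Bool :=
  Function.update x i (!x i)

/-- The sensitivity of `f` at `x`: the number of coordinates whose flip changes `f`. -/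
noncomputable def sens {n : ℕ} (f : (Fin n → Bool) → ℝ) (x : Fin n → Bool) : ℕ :=
  (Finset.univ.filter (fun i => f (flipAt x i) ≠ f x)).card

/-- The Boolean surface area `BSA[f] = E_x √(s_f(x))`, `x` uniform on the cube. -/
noncomputable def BSA {n : ℕ} (f : (Fin n → Bool) → ℝ) : ℝ :=
  (∑ x : Fin n → Bool, Real.sqrt (sens f x)) / 2 ^ n

/-- Evaluation of a polynomial at a point of the cube `{-1,1}^n`. -/
noncomputable def pev {n : ℕ} (p : MvPolynomial (Fin n) ℝ) (x : Fin n → Bool) : ℝ :=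
  MvPolynomial.eval (fun i => chi (x i)) p

/-- `f` is a degree-`d` polynomial threshold function: `f = sgn p` for some multilinear
polynomial `p` of total degree at most `d` that is nonvanishing on the cube. -/
def IsPTF (d : ℕ) {n : ℕ} (f : (Fin n → Bool) → ℝ) : Prop :=
  ∃ p : MvPolynomial (Fin n) ℝ,
    (∀ m ∈ p.support, ∀ i, m i ≤ 1) ∧ p.totalDegree ≤ d ∧
    ∀ x, pev p x ≠ 0 ∧ f x = Real.sign (pev p x)


namespace PTF

section Avg
variable {α γ : Type} [Fintype α] [Fintype γ]

/-- Average over a finite type. -/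
noncomputable def av {α : Type} [Fintype α] (φ : α → ℝ) : ℝ := (∑ a, φ a) / Fintype.card α

lemma av_add (φ ψ : α → ℝ) : av (fun a => φ a + ψ a) = av φ + av ψ := by
  simp [av, Finset.sum_add_distrib, add_div]

lemma av_sub (φ ψ : α → ℝ) : av (fun a => φ a - ψ a) = av φ - av ψ := by
  simp [av, Finset.sum_sub_distrib, sub_div]

lemma av_mul_left (c : ℝ) (φ : α → ℝ) : av (fun a => c * φ a) = c * av φ := by
  simp [av, ← Finset.mul_sum, mul_div_assoc]

lemma av_neg (φ : α → ℝ) : av (fun a => - φ a) = - av φ := by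
  simp [av, neg_div]

lemma av_sum {κ : Type} (s : Finset κ) (φ : κ → α → ℝ) :
    av (fun a => ∑ k ∈ s, φ k a) = ∑ k ∈ s, av (φ k) := by
  simp only [av]
  rw [Finset.sum_comm, Finset.sum_div]

lemma av_comm (φ : α → γ → ℝ) :
    av (fun a => av (fun c => φ a c)) = av (fun c => av (fun a => φ a c)) := by
  simp only [av]
  rw [← Finset.sum_div, ← Finset.sum_div, Finset.sum_comm, div_right_comm]

lemma av_prod (φ : α × γ → ℝ) : av φ = av (fun a => av (fun c => φ (a, c))) := by
  simp only [av]
  rw [← Finset.sum_div, Fintype.sum_prod_type, Fintype.card_prod, div_div, mul_comm, Nat.cast_mul]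

lemma av_equiv (e : α ≃ γ) (φ : γ → ℝ) : av (fun a => φ (e a)) = av φ := by
  simp only [av]
  rw [Equiv.sum_comp e φ, Fintype.card_congr e]

lemma av_const [Nonempty α] (c : ℝ) : av (fun _ : α => c) = c := by
  have : (Fintype.card α : ℝ) ≠ 0 := by exact_mod_cast Fintype.card_ne_zero
  simp [av]

lemma av_mono {φ ψ : α → ℝ} (h : ∀ a, φ a ≤ ψ a) : av φ ≤ av ψ := by
  unfold av
  gcongr
  exact h _

lemma av_nonneg {φ : α → ℝ} (h : ∀ a, 0 ≤ φ a) : 0 ≤ av φ := by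
  unfold av
  exact div_nonneg (Finset.sum_nonneg fun a _ => h a) (by positivity)

lemma av_cs (φ ψ : α → ℝ) :
    (av (fun a => φ a * ψ a)) ^ 2 ≤ av (fun a => φ a ^ 2) * av (fun a => ψ a ^ 2) := by
  simp only [av]
  rw [div_pow, div_mul_div_comm, sq (Fintype.card α : ℝ)]
  gcongr
  exact Finset.sum_mul_sq_le_sq_mul_sq _ _ _

/-- If an involution-like permutation negates the function, its average vanishes. -/
lemma av_eq_zero_of_neg (e : α ≃ α) (φ : α → ℝ) (h : ∀ a, φ (e a) = - φ a) : av φ = 0 := by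
  have h1 := av_equiv e φ
  simp only [h] at h1
  rw [av_neg] at h1
  linarith

end Avg

section Cube
variable {ι B : Type}

/-- Coordinatewise xor. -/
def xr (x F : ι → Bool) : ι → Bool := fun i => xor (x i) (F i)

/-- pull back a pattern on the labels. -/
def pb (β : ι → B) (y : B → Bool) : ι → Bool := fun i => y (β i)

/-- indicator of a point -/
def pt [DecidableEq ι] (i : ι) : ι → Bool := fun j => decide (j = i)

lemma xr_assoc (x y z : ι → Bool) : xr (xr x y) z = xr x (xr y z) := by
  funext i; simp [xr]

lemma xr_comm (x y : ι → Bool) : xr x y = xr y x := by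
  funext i; simp [xr, Bool.xor_comm]

lemma xr_right_comm (x y z : ι → Bool) : xr (xr x y) z = xr (xr x z) y := by
  rw [xr_assoc, xr_comm y z, xr_assoc]

@[simp] lemma xr_self_right (x y : ι → Bool) : xr (xr x y) y = x := by
  funext i; simp [xr]

lemma pb_xr (β : ι → B) (y z : B → Bool) : pb β (xr y z) = xr (pb β y) (pb β z) := rfl

/-- xor with a fixed vector as a permutation -/
def xrE (F : ι → Bool) : (ι → Bool) ≃ (ι → Bool) where
  toFun x := xr x F
  invFun x := xr x F
  left_inv x := by simp
  right_inv x := by simp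

lemma av_xr [Fintype ι] [DecidableEq ι] (F : ι → Bool) (φ : (ι → Bool) → ℝ) :
    av (fun x => φ (xr x F)) = av φ := av_equiv (xrE F) φ

/-- mix: on `R` use `y`, elsewhere `x`. -/
def mix (R : ι → Bool) (x y : ι → Bool) : ι → Bool := fun i => if R i then y i else x i

lemma mix_eq (R x y : ι → Bool) : mix R x y = xr x (fun i => R i && xor (x i) (y i)) := by
  funext i
  simp only [mix, xr]
  cases R i <;> cases x i <;> cases y i <;> rfl

/-- sign with `sg 0 = 1` -/
noncomputable def sg (t : ℝ) : ℝ := if 0 ≤ t then 1 else -1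

lemma sg_sq (t : ℝ) : sg t ^ 2 = 1 := by unfold sg; split_ifs <;> norm_num
lemma sg_cases (t : ℝ) : sg t = 1 ∨ sg t = -1 := by unfold sg; split_ifs <;> simp

lemma chi_sq (b : Bool) : chi b ^ 2 = 1 := by cases b <;> norm_num [chi]
lemma chi_mul_self (b : Bool) : chi b * chi b = 1 := by cases b <;> norm_num [chi]
lemma chi_xor_true (b : Bool) : chi (xor b true) = - chi b := by cases b <;> norm_num [chi]
lemma chi_not (b : Bool) : chi (!b) = - chi b := by cases b <;> norm_num [chi]

/-- four times the average sensitivity (of a sign-valued function) -/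
noncomputable def J [Fintype ι] [DecidableEq ι] (f : (ι → Bool) → ℝ) : ℝ :=
  ∑ i, av (fun x => (f x - f (xr x (pt i))) ^ 2)

/-- extend a pattern by `false` at `none` -/
def ex {k : ℕ} (z : Fin k → Bool) : Option (Fin k) → Bool
  | none => false
  | some t => z t

/-- parity sign -/
noncomputable def par {k : ℕ} (z : Fin k → Bool) : ℝ := ∏ t, chi (z t)

/-- `g` has degree at most `d`: all `(d+1)`-st differences along disjoint sets vanish. -/
def Deg (d : ℕ) (g : (ι → Bool) → ℝ) : Prop :=
  ∀ (β : ι → Option (Fin (d + 1))) (x : ι → Bool),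
    ∑ z : Fin (d + 1) → Bool, par z * g (xr x (pb β (ex z))) = 0

lemma Deg.comb {d : ℕ} {g h : (ι → Bool) → ℝ} (hg : Deg d g) (hh : Deg d h) (a c : ℝ) :
    Deg d (fun x => a * g x + c * h x) := by
  intro β x
  have h1 := hg β x
  have h2 := hh β x
  have : ∀ z : Fin (d + 1) → Bool, par z * (a * g (xr x (pb β (ex z))) + c * h (xr x (pb β (ex z))))
      = a * (par z * g (xr x (pb β (ex z)))) + c * (par z * h (xr x (pb β (ex z)))) := by
    intro z; ring
  simp only [this, Finset.sum_add_distrib, ← Finset.mul_sum, h1, h2]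
  ring

lemma Deg.shift {d : ℕ} {g : (ι → Bool) → ℝ} (hg : Deg d g) (u : ι → Bool) :
    Deg d (fun x => g (xr x u)) := by
  intro β x
  have h1 := hg β (xr x u)
  simpa only [xr_right_comm] using h1

lemma Deg.subst {d : ℕ} {g : (ι → Bool) → ℝ} (hg : Deg d g) (x : ι → Bool) (β : ι → B) :
    Deg d (fun y : B → Bool => g (xr x (pb β y))) := by
  intro γ y
  have h1 := hg (γ ∘ β) (xr x (pb β y))
  simp only [xr_assoc] at h1
  exact h1

lemma Deg.const {g : (ι → Bool) → ℝ} (hg : Deg 0 g) (x y : ι → Bool) : g x = g y := by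
  have h1 := hg (fun i => if xor (x i) (y i) then some 0 else none) y
  rw [← (Equiv.funUnique (Fin 1) Bool).symm.sum_comp] at h1
  simp only [Fintype.sum_bool, par] at h1
  have e1 : xr y (pb (fun i => if xor (x i) (y i) then some 0 else none)
      (ex ((Equiv.funUnique (Fin 1) Bool).symm true))) = x := by
    funext i
    simp only [xr, pb]
    cases x i <;> cases y i <;> simp [ex]
  have e2 : xr y (pb (fun i => if xor (x i) (y i) then some 0 else none)
      (ex ((Equiv.funUnique (Fin 1) Bool).symm false))) = y := by
    funext i
    simp only [xr, pb]
    cases x i <;> cases y i <;> simp [ex]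
  rw [e1, e2] at h1
  simp [chi] at h1
  linarith

/-- discrete derivative -/
noncomputable def dv [DecidableEq ι] (i : ι) (g : (ι → Bool) → ℝ) (x : ι → Bool) : ℝ :=
  chi (x i) * (g x - g (xr x (pt i)))

lemma xr_pt_same [DecidableEq ι] (x : ι → Bool) (i : ι) : xr x (pt i) i = !x i := by
  simp [xr, pt]

lemma xr_pt_ne [DecidableEq ι] (x : ι → Bool) {i j : ι} (h : j ≠ i) : xr x (pt i) j = x j := by
  simp [xr, pt, h]

lemma dv_flip [DecidableEq ι] (i : ι) (g : (ι → Bool) → ℝ) (x : ι → Bool) :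
    dv i g (xr x (pt i)) = dv i g x := by
  simp only [dv, xr_pt_same, xr_self_right, chi_not]
  ring

/-- `dv i g` does not depend on coordinate `i`. -/
lemma dv_congr [DecidableEq ι] (i : ι) (g : (ι → Bool) → ℝ) {x y : ι → Bool}
    (h : ∀ j, j ≠ i → x j = y j) : dv i g x = dv i g y := by
  by_cases hi : x i = y i
  · have : x = y := by
      funext j
      by_cases hj : j = i
      · rw [hj, hi]
      · exact h j hj
    rw [this]
  · have : x = xr y (pt i) := by
      funext j
      by_cases hj : j = i
      · rw [hj, xr_pt_same]
        cases hx : x i <;> cases hy : y i <;> simp_all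
      · rw [xr_pt_ne _ hj, h j hj]
    rw [this, dv_flip]

lemma Deg.deriv [DecidableEq ι] {d : ℕ} {g : (ι → Bool) → ℝ} (hg : Deg (d + 1) g) (i : ι) :
    Deg d (dv i g) := by
  intro β x
  have h1 := hg (fun j => if j = i then some 0 else (β j).map Fin.succ) x
  rw [← (Fin.consEquiv (fun _ => Bool)).sum_comp, Fintype.sum_prod_type] at h1
  simp only [Fintype.sum_bool, Fin.consEquiv, Equiv.coe_fn_mk] at h1
  have hp : ∀ (b : Bool) (z : Fin (d + 1) → Bool), par (Fin.cons b z : Fin (d + 2) → Bool) = chi b * par z := by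
    intro b z
    simp [par, Fin.prod_univ_succ]
  set γ : ι → Option (Fin (d + 1)) := fun j => if j = i then none else β j with hγ
  have e1 : ∀ z : Fin (d + 1) → Bool,
      xr x (pb (fun j => if j = i then some 0 else (β j).map Fin.succ)
        (ex (Fin.cons false z : Fin (d + 2) → Bool))) = xr x (pb γ (ex z)) := by
    intro z
    funext j
    by_cases hj : j = i
    · simp [xr, pb, hj, hγ, ex]
    · rcases hb : β j with _ | t <;> simp [xr, pb, hj, hγ, ex, hb]
  have e2 : ∀ z : Fin (d + 1) → Bool,
      xr x (pb (fun j => if j = i then some 0 else (β j).map Fin.succ)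
        (ex (Fin.cons true z : Fin (d + 2) → Bool))) = xr (xr x (pb γ (ex z))) (pt i) := by
    intro z
    funext j
    by_cases hj : j = i
    · simp [xr, pb, hj, hγ, ex, pt]
    · rcases hb : β j with _ | t <;> simp [xr, pb, hj, hγ, ex, hb, pt]
  simp only [hp, e1, e2] at h1
  have e3 : ∀ z : Fin (d + 1) → Bool, dv i g (xr x (pb β (ex z))) =
      chi (x i) * (g (xr x (pb γ (ex z))) - g (xr (xr x (pb γ (ex z))) (pt i))) := by
    intro z
    have : dv i g (xr x (pb β (ex z))) = dv i g (xr x (pb γ (ex z))) := by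
      apply dv_congr
      intro j hj
      simp [xr, pb, hγ, hj]
    rw [this]
    simp [dv, xr, pb, hγ, ex]
  simp only [e3]
  rw [← Finset.sum_add_distrib] at h1
  have : ∀ z : Fin (d + 1) → Bool, par z * (chi (x i) * (g (xr x (pb γ (ex z))) - g (xr (xr x (pb γ (ex z))) (pt i))))
     = - chi (x i) * (chi true * par z * g (xr (xr x (pb γ (ex z))) (pt i)) + chi false * par z * g (xr x (pb γ (ex z)))) := by
    intro z
    rw [show chi true = 1 from by simp [chi], show chi false = -1 from by simp [chi]]
    ring
  simp only [this, ← Finset.mul_sum, h1, mul_zero]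

/-- the key sign identity on an edge -/
lemma sens_sign [DecidableEq ι] (g : (ι → Bool) → ℝ) (i : ι) (x : ι → Bool) :
    (sg (g x) - sg (g (xr x (pt i)))) ^ 2 =
      2 * (chi (x i) * (sg (g x) - sg (g (xr x (pt i)))) * sg (dv i g x)) := by
  unfold dv
  generalize g x = a
  generalize g (xr x (pt i)) = b
  have sp : ∀ t : ℝ, 0 ≤ t → sg t = 1 := fun t h => by simp [sg, h]
  have sn : ∀ t : ℝ, t < 0 → sg t = -1 := fun t h => by simp [sg, h]
  rcases lt_or_ge a 0 with ha | ha <;> rcases lt_or_ge b 0 with hb | hb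
  · rw [sn a ha, sn b hb]; ring
  · rw [sn a ha, sp b hb]
    cases x i
    · rw [show chi false = -1 from by simp [chi], sp (-1 * (a - b)) (by linarith)]; ring
    · rw [show chi true = 1 from by simp [chi], sn (1 * (a - b)) (by linarith)]; ring
  · rw [sp a ha, sn b hb]
    cases x i
    · rw [show chi false = -1 from by simp [chi], sn (-1 * (a - b)) (by linarith)]; ring
    · rw [show chi true = 1 from by simp [chi], sp (1 * (a - b)) (by linarith)]; ring
  · rw [sp a ha, sp b hb]; ring

end Cube

end PTF

namespace PTF

/-- `H d N X`: average sensitivity bound for degree `d` threshold functions in dimension `≤ N`. -/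
def H (d N : ℕ) (X : ℝ) : Prop :=
  ∀ (ι : Type) [Fintype ι] [DecidableEq ι], 0 < Fintype.card ι → Fintype.card ι ≤ N →
    ∀ g : (ι → Bool) → ℝ, Deg d g →
      J (fun x => sg (g x)) ≤ X * Real.sqrt (Fintype.card ι)

section Edge
variable {ι B : Type} [Fintype ι] [DecidableEq ι] [Fintype B] [DecidableEq B]

/-- the test function -/
noncomputable def tst (g : (ι → Bool) → ℝ) (u : B → Bool) (a c : ℝ) (β : ι → B) (x : ι → Bool) : ℝ :=
  a * g (xr x (pb β u)) + c * g x

/-- probability (times four) that a test changes sign when the block `l` is flipped -/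
noncomputable def edgeP (g : (ι → Bool) → ℝ) (u : B → Bool) (a c : ℝ) (l : B) : ℝ :=
  av (fun β : ι → B => av (fun x : ι → Bool =>
    (sg (tst g u a c β x) - sg (tst g u a c β (xr x (pb β (pt l))))) ^ 2))

lemma edgeP_nonneg (g : (ι → Bool) → ℝ) (u : B → Bool) (a c : ℝ) (l : B) :
    0 ≤ edgeP g u a c l :=
  av_nonneg fun _ => av_nonneg fun _ => sq_nonneg _

lemma edge_sum {d N : ℕ} {X : ℝ} (hH : H d N X) [Nonempty B] (hB : Fintype.card B ≤ N)
    {g : (ι → Bool) → ℝ} (hg : Deg d g) (u : B → Bool) (a c : ℝ) :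
    ∑ l, edgeP g u a c l ≤ X * Real.sqrt (Fintype.card B) := by
  have h1 : ∀ (β : ι → B) (x : ι → Bool),
      J (fun y : B → Bool => sg (tst g u a c β (xr x (pb β y)))) ≤ X * Real.sqrt (Fintype.card B) := by
    intro β x
    apply hH B Fintype.card_pos hB
    have := ((hg.shift (pb β u)).subst x β).comb (hg.subst x β) a c
    exact this
  have h2 : av (fun β : ι → B => av (fun x : ι → Bool =>
      J (fun y : B → Bool => sg (tst g u a c β (xr x (pb β y)))))) ≤ X * Real.sqrt (Fintype.card B) := by
    calc _ ≤ av (fun β : ι → B => av (fun x : ι → Bool => X * Real.sqrt (Fintype.card B))) :=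
          av_mono fun β => av_mono fun x => h1 β x
      _ = _ := by rw [av_const, av_const]
  refine le_trans (le_of_eq ?_) h2
  simp only [J, av_sum]
  refine Finset.sum_congr rfl fun l _ => ?_
  unfold edgeP
  congr 1
  funext β
  rw [av_comm]
  have : ∀ y : B → Bool, av (fun x : ι → Bool => (sg (tst g u a c β (xr x (pb β y))) -
      sg (tst g u a c β (xr x (pb β (xr y (pt l)))))) ^ 2) = 
      av (fun x : ι → Bool =>
    (sg (tst g u a c β x) - sg (tst g u a c β (xr x (pb β (pt l))))) ^ 2) := by
    intro y
    refine Eq.trans ?_ (av_xr (pb β y) _)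
    simp only [pb_xr, xr_assoc]
  simp only [this]
  rw [av_const]

lemma edge_symm (g : (ι → Bool) → ℝ) (u : B → Bool) (a c : ℝ) (e : B ≃ B) (he : ∀ l, u (e l) = u l)
    (l : B) : edgeP g u a c (e l) = edgeP g u a c l := by
  unfold edgeP
  rw [← av_equiv (Equiv.arrowCongr (Equiv.refl ι) e)]
  congr 1
  funext β
  have e1 : pb (Equiv.arrowCongr (Equiv.refl ι) e β) u = pb β u := by
    funext i; simp [pb, he]
  have e2 : pb (Equiv.arrowCongr (Equiv.refl ι) e β) (pt (e l)) = pb β (pt l) := by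
    funext i; simp [pb, pt]
  simp only [tst, e1, e2]

lemma edge_bound {d N : ℕ} {X : ℝ} (hH : H d N X) [Nonempty B] (hB : Fintype.card B ≤ N)
    {g : (ι → Bool) → ℝ} (hg : Deg d g) (u : B → Bool) (a c : ℝ) (l : B) (hl : u l = false) :
    edgeP g u a c l * (univ.filter (fun l' => u l' = false)).card ≤ X * Real.sqrt (Fintype.card B) := by
  refine le_trans ?_ (edge_sum hH hB hg u a c)
  calc _ = ∑ l' ∈ univ.filter (fun l' => u l' = false), edgeP g u a c l' := by
        rw [Finset.sum_congr rfl (g := fun _ => edgeP g u a c l), Finset.sum_const, nsmul_eq_mul, mul_comm]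
        intro l' hl'
        simp only [mem_filter, mem_univ, true_and] at hl'
        have := edge_symm g u a c (Equiv.swap l l') (fun m => by
          rcases eq_or_ne m l with rfl | h1
          · simp [hl, hl']
          · rcases eq_or_ne m l' with rfl | h2
            · simp [hl, hl']
            · rw [Equiv.swap_apply_of_ne_of_ne h1 h2]) l
        rwa [Equiv.swap_apply_left] at this
    _ ≤ _ := Finset.sum_le_univ_sum_of_nonneg fun l' => edgeP_nonneg g u a c l'

/-- `Q`: noise sensitivity for flipping a random block -/
noncomputable def QQ (f : (ι → Bool) → ℝ) (l : B) : ℝ :=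
  av (fun β : ι → B => av (fun x : ι → Bool => (f x - f (xr x (pb β (pt l)))) ^ 2))

lemma QQ_bound {d N : ℕ} {X : ℝ} (hH : H d N X) [Nonempty B] (hB : Fintype.card B ≤ N)
    {g : (ι → Bool) → ℝ} (hg : Deg d g) (l : B) :
    QQ (fun x => sg (g x)) l * Fintype.card B ≤ X * Real.sqrt (Fintype.card B) := by
  have := edge_bound hH hB hg (fun _ => false) 0 1 l rfl
  simpa [edgeP, tst, QQ, Finset.card_univ] using this

end Edge
end PTF

set_option linter.unusedSectionVars false

namespace PTF

section Tools
variable {ι B C : Type} [Fintype ι] [DecidableEq ι] [Fintype B] [DecidableEq B]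
  [Fintype C] [DecidableEq C]

lemma orth (c : ι → (ι → Bool) → ℝ)
    (h : ∀ i j x, i ≠ j → c i (xr x (pt i)) * c j (xr x (pt i)) = c i x * c j x) :
    av (fun x => (∑ i, chi (x i) * c i x) ^ 2) = ∑ i, av (fun x => c i x ^ 2) := by
  have h1 : ∀ x : ι → Bool, (∑ i, chi (x i) * c i x) ^ 2 =
      ∑ i, ∑ j, (chi (x i) * c i x) * (chi (x j) * c j x) := by
    intro x
    rw [sq, Finset.sum_mul_sum]
  simp only [h1, av_sum]
  refine Finset.sum_congr rfl fun i _ => ?_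
  rw [Finset.sum_eq_single i]
  · congr 1
    funext x
    have := chi_sq (x i)
    linear_combination (c i x) ^ 2 * this
  · intro j _ hj
    apply av_eq_zero_of_neg (xrE (pt i))
    intro x
    simp only [xrE, Equiv.coe_fn_mk]
    rw [xr_pt_same, xr_pt_ne _ hj, chi_not]
    have := h i j x hj.symm
    linear_combination (- chi (x i) * chi (x j)) * this
  · simp

lemma av_split (φ : (ι → B × C) → ℝ) :
    av φ = av (fun β : ι → B => av (fun γ : ι → C => φ (fun i => (β i, γ i)))) := by
  rw [← av_equiv (Equiv.arrowProdEquivProdArrow ι (fun _ => B) (fun _ => C)).symm φ, av_prod]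
  rfl

lemma av_indep (i : ι) (φ : (ι → C) → ℝ) (hφ : ∀ β β', (∀ j, j ≠ i → β j = β' j) → φ β = φ β')
    (l : C) : Fintype.card C * av (fun β => (if β i = l then 1 else 0) * φ β) = av φ := by
  have h1 : ∀ l', av (fun β => (if β i = l' then 1 else 0) * φ β) =
      av (fun β => (if β i = l then 1 else 0) * φ β) := by
    intro l'
    rw [← av_equiv (Equiv.piCongrRight (fun j : ι => if j = i then Equiv.swap l l' else Equiv.refl C))]
    congr 1
    funext β
    congr 1
    · simp only [Equiv.piCongrRight_apply, Pi.map_apply, if_true]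
      congr 1
      rw [Equiv.swap_apply_eq_iff, Equiv.swap_apply_right]
    · apply hφ
      intro j hj
      simp [hj]
  have h2 : ∑ l', av (fun β => (if β i = l' then 1 else 0) * φ β) = av φ := by
    rw [← av_sum]
    congr 1
    funext β
    rw [← Finset.sum_mul, Finset.sum_ite_eq]
    simp
  rw [← h2, Finset.sum_congr rfl fun l' _ => h1 l', Finset.sum_const, nsmul_eq_mul, Finset.card_univ]

/-- the block of label `l` -/
def blk (β : ι → C) (l : C) : ι → Bool := pb β (pt l)

lemma blk_apply (β : ι → C) (l : C) (i : ι) : blk β l i = decide (β i = l) := rfl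

lemma mixQ (f : (ι → Bool) → ℝ) (l : C) :
    av (fun β : ι → C => av (fun x => av (fun w => (f x - f (mix (blk β l) x w)) ^ 2))) =
      QQ f ((l, true) : C × Bool) := by
  unfold QQ
  rw [av_split]
  congr 1
  funext β
  refine Eq.trans ?_ (av_comm (fun x (γ : ι → Bool) =>
    (f x - f (xr x (pb (fun i => (β i, γ i)) (pt ((l, true) : C × Bool))))) ^ 2))
  congr 1
  funext x
  refine (av_xr x _).symm.trans ?_
  congr 1
  funext w
  rw [mix_eq]
  have : (fun i => blk β l i && xor (x i) (xr w x i)) =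
      pb (fun i => (β i, w i)) (pt ((l, true) : C × Bool)) := by
    funext i
    simp only [xr, blk, pb, pt]
    rw [Bool.eq_iff_iff]
    simp only [Bool.and_eq_true, decide_eq_true_eq, Prod.mk.injEq]
    cases x i <;> simp
  rw [this]

/-- swapping two points on a set -/
def swE (R : ι → Bool) : (ι → Bool) × (ι → Bool) ≃ (ι → Bool) × (ι → Bool) where
  toFun p := (mix R p.1 p.2, mix R p.2 p.1)
  invFun p := (mix R p.1 p.2, mix R p.2 p.1)
  left_inv p := by
    ext i <;> simp only [mix] <;> split_ifs <;> rfl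
  right_inv p := by
    ext i <;> simp only [mix] <;> split_ifs <;> rfl

lemma av_swap (R : ι → Bool) (φ : (ι → Bool) → (ι → Bool) → ℝ) :
    av (fun x => av (fun y => φ (mix R x y) (mix R y x))) = av (fun x => av (fun y => φ x y)) := by
  have := av_equiv (swE R) (fun p => φ p.1 p.2)
  rw [av_prod, av_prod] at this
  exact this

lemma cs_sum {Ω : Type} [Fintype Ω] (A D : ι → Ω → ℝ) :
    (∑ i, av (fun w => A i w * D i w)) ^ 2 ≤
      (∑ i, av (fun w => A i w ^ 2)) * (∑ i, av (fun w => D i w ^ 2)) := by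
  simp only [av]
  rw [← Finset.sum_div, ← Finset.sum_div, ← Finset.sum_div, div_pow, div_mul_div_comm,
    sq (Fintype.card Ω : ℝ)]
  gcongr
  have := Finset.sum_mul_sq_le_sq_mul_sq (univ : Finset (ι × Ω)) (fun p => A p.1 p.2) (fun p => D p.1 p.2)
  simpa only [Fintype.sum_prod_type] using this

lemma mix_flip (R x y : ι → Bool) (i : ι) (h : R i = true) : mix R (xr x (pt i)) y = mix R x y := by
  funext j
  simp only [mix]
  split_ifs with hj
  · rfl
  · rw [xr_pt_ne]
    rintro rfl
    exact hj h

lemma QQ_nonneg (f : (ι → Bool) → ℝ) (l : C) : 0 ≤ QQ f l :=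
  av_nonneg fun _ => av_nonneg fun _ => sq_nonneg _

end Tools

section Main
variable {ι : Type} [Fintype ι] [DecidableEq ι]

/-- interpolation quantity -/
noncomputable def Th (f : (ι → Bool) → ℝ) (σ : ι → (ι → Bool) → ℝ) {B : Type} [Fintype B]
    [DecidableEq B] (b0 : B) : ℝ :=
  ∑ i, av (fun β : ι → B => av (fun x => av (fun y => chi (x i) * f x * σ i (mix (blk β b0) x y))))

variable (f : (ι → Bool) → ℝ) (σ : ι → (ι → Bool) → ℝ)

lemma Th_unit (hf : ∀ x, f x ^ 2 = 1) (hσ1 : ∀ i x, σ i x ^ 2 = 1) : Th f σ (() : Unit) ≤ Real.sqrt (Fintype.card ι) := by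
  apply Real.le_sqrt_of_sq_le
  have e : ∀ (β : ι → Unit) x y, mix (blk β ()) x y = y := by
    intro β x y; funext i; simp [mix, blk_apply]
  have h1 : Th f σ (() : Unit) = av (fun x => av (fun y => f x * ∑ i, chi (x i) * σ i y)) := by
    simp only [Th, e, av_const]
    rw [← av_sum]
    congr 1
    funext x
    rw [← av_sum]
    congr 1
    funext y
    rw [Finset.mul_sum]
    exact Finset.sum_congr rfl fun i _ => by ring
  have h2 := av_cs (fun p : (ι → Bool) × (ι → Bool) => f p.1) (fun p => ∑ i, chi (p.1 i) * σ i p.2)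
  rw [av_prod, av_prod, av_prod] at h2
  rw [h1]
  refine h2.trans (le_of_eq ?_)
  simp only [hf, av_const, one_mul]
  rw [av_comm]
  have h3 : ∀ y, av (fun x : ι → Bool => (∑ i, chi (x i) * σ i y) ^ 2) = Fintype.card ι := by
    intro y
    rw [orth (fun i _ => σ i y) (fun _ _ _ _ => rfl)]
    simp [hσ1, av_const]
  simp only [h3, av_const]

lemma J_eq (hσ : ∀ i x y, (∀ j, j ≠ i → x j = y j) → σ i x = σ i y)
    (hJ : ∀ i x, (f x - f (xr x (pt i))) ^ 2 = 2 * (chi (x i) * (f x - f (xr x (pt i))) * σ i x)) :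
    J f = 4 * ∑ i, av (fun x => chi (x i) * f x * σ i x) := by
  unfold J
  rw [Finset.mul_sum]
  refine Finset.sum_congr rfl fun i _ => ?_
  simp only [hJ]
  rw [av_mul_left]
  have h1 : av (fun x => chi (x i) * f (xr x (pt i)) * σ i x) = - av (fun x => chi (x i) * f x * σ i x) := by
    rw [← av_xr (pt i), ← av_neg]
    congr 1
    funext x
    rw [xr_pt_same, xr_self_right, chi_not, hσ i (xr x (pt i)) x (fun j hj => xr_pt_ne x hj)]
    ring
  have h2 : av (fun x => chi (x i) * (f x - f (xr x (pt i))) * σ i x) =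
      av (fun x => chi (x i) * f x * σ i x) - av (fun x => chi (x i) * f (xr x (pt i)) * σ i x) := by
    rw [← av_sub]
    congr 1
    funext x
    ring
  rw [h2, h1]
  ring

lemma Th_final (hσ : ∀ i x y, (∀ j, j ≠ i → x j = y j) → σ i x = σ i y)
    {B : Type} [Fintype B] [DecidableEq B] [Nonempty B] (b0 : B) :
    ((∑ i, av (fun x => chi (x i) * f x * σ i x)) - Th f σ b0) ^ 2 ≤
      J f / 4 * ∑ i, QQ (σ i) ((b0, true) : B × Bool) := by
  set A : ι → (ι → B) × (ι → Bool) × (ι → Bool) → ℝ :=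
    fun i w => chi (w.2.1 i) * (f w.2.1 - f (xr w.2.1 (pt i))) / 2
  set D : ι → (ι → B) × (ι → Bool) × (ι → Bool) → ℝ :=
    fun i w => σ i w.2.1 - σ i (mix (blk w.1 b0) w.2.1 w.2.2)
  have h1 := cs_sum A D
  have hA : ∑ i, av (fun w => A i w ^ 2) = J f / 4 := by
    simp only [J, Finset.sum_div]
    refine Finset.sum_congr rfl fun i _ => ?_
    simp only [av_prod, A, av_const]
    rw [div_eq_inv_mul, ← av_mul_left]
    congr 1
    funext x
    have := chi_sq (x i)
    linear_combination ((f x - f (xr x (pt i))) ^ 2 / 4) * this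
  have hD : ∑ i, av (fun w => D i w ^ 2) = ∑ i, QQ (σ i) ((b0, true) : B × Bool) := by
    refine Finset.sum_congr rfl fun i _ => ?_
    rw [← mixQ]
    simp only [av_prod, D]
  rw [hA, hD] at h1
  refine le_trans (le_of_eq ?_) h1
  congr 1
  unfold Th
  rw [← Finset.sum_sub_distrib]
  refine Finset.sum_congr rfl fun i _ => ?_
  simp only [av_prod, A, D]
  have h2 : av (fun x => chi (x i) * f x * σ i x) =
     av (fun β : ι → B => av (fun x => av (fun y : ι → Bool => chi (x i) * f x * σ i x))) := by
    simp only [av_const]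
  rw [h2, ← av_sub]
  congr 1
  funext β
  rw [← av_sub]
  simp only [← av_sub]
  rw [av_comm, av_comm (fun x y => _ * _)]
  congr 1
  funext y
  have h3 : av (fun x => chi (x i) * f (xr x (pt i)) * (σ i x - σ i (mix (blk β b0) x y))) =
      - av (fun x => chi (x i) * f x * (σ i x - σ i (mix (blk β b0) x y))) := by
    rw [← av_xr (pt i), ← av_neg]
    congr 1
    funext x
    rw [xr_pt_same, xr_self_right, chi_not, hσ i (xr x (pt i)) x (fun j hj => xr_pt_ne x hj),
      hσ i (mix _ (xr x (pt i)) y) (mix (blk β b0) x y) (fun j hj => by simp [mix, xr_pt_ne x hj])]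
    ring
  have h4 : av (fun x => chi (x i) * (f x - f (xr x (pt i))) / 2 * (σ i x - σ i (mix (blk β b0) x y))) =
      1 / 2 * (av (fun x => chi (x i) * f x * (σ i x - σ i (mix (blk β b0) x y))) -
      av (fun x => chi (x i) * f (xr x (pt i)) * (σ i x - σ i (mix (blk β b0) x y)))) := by
    rw [← av_sub, ← av_mul_left]
    congr 1
    funext x
    ring
  rw [h4, h3]
  have : ∀ t : ℝ, 1 / 2 * (t - -t) = t := fun t => by ring
  rw [this]
  congr 1
  funext x
  ring

end Main
end PTF

namespace PTF
section Step
variable {ι : Type} [Fintype ι] [DecidableEq ι]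
variable {B : Type} [Fintype B] [DecidableEq B] [Nonempty B]

/-- difference of two interpolants -/
noncomputable def Dl (σ : ι → (ι → Bool) → ℝ) (b0 : B) (i : ι) (β : ι → B × Bool) (x y : ι → Bool) : ℝ :=
  σ i (mix (blk β (b0, true)) x y) - σ i (mix (blk (fun j => (β j).1) b0) x y)

lemma Th_fst (f : (ι → Bool) → ℝ) (σ : ι → (ι → Bool) → ℝ) (b0 : B) :
    Th f σ b0 = ∑ i, av (fun β : ι → B × Bool => av (fun x => av (fun y =>
      chi (x i) * f x * σ i (mix (blk (fun j => (β j).1) b0) x y)))) := by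
  unfold Th
  refine Finset.sum_congr rfl fun i _ => ?_
  rw [av_split]
  simp only [av_const]

lemma Dl_flip (σ : ι → (ι → Bool) → ℝ) (b0 : B) (i j : ι) (β : ι → B × Bool) (x y : ι → Bool)
    (h : β j = (b0, true)) : Dl σ b0 i β (xr x (pt j)) y = Dl σ b0 i β x y := by
  unfold Dl
  rw [mix_flip, mix_flip] <;> simp [blk_apply, h]

lemma Dl_QQ (σ : ι → (ι → Bool) → ℝ) (b0 : B) (i : ι) :
    av (fun β : ι → B × Bool => av (fun x => av (fun y => Dl σ b0 i β x y ^ 2))) =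
      QQ (σ i) (((b0, false), true) : (B × Bool) × Bool) := by
  rw [← mixQ]
  congr 1
  funext β
  rw [← av_swap (blk (fun j => (β j).1) b0) (fun x w => (σ i x - σ i (mix (blk β (b0, false)) x w)) ^ 2)]
  congr 1
  funext x
  congr 1
  funext y
  unfold Dl
  have : mix (blk β (b0, true)) x y = mix (blk β (b0, false)) (mix (blk (fun j => (β j).1) b0) x y)
      (mix (blk (fun j => (β j).1) b0) y x) := by
    funext j
    simp only [mix, blk_apply, decide_eq_true_eq, Prod.ext_iff]
    generalize β j = p
    by_cases hp : p.1 = b0 <;> cases p.2 <;> simp [hp]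
  rw [this]
  ring

lemma Th_step (f : (ι → Bool) → ℝ) (σ : ι → (ι → Bool) → ℝ)
    (hσ : ∀ i x y, (∀ j, j ≠ i → x j = y j) → σ i x = σ i y) (b0 : B) :
    (Th f σ ((b0, true) : B × Bool) - Th f σ b0) ^ 2 ≤
      (2 * Fintype.card B) * QQ f (((b0, true), true) : (B × Bool) × Bool) *
        ∑ i, QQ (σ i) (((b0, false), true) : (B × Bool) × Bool) := by
  set S : (ι → B × Bool) → (ι → Bool) → (ι → Bool) → ℝ :=
    fun β x y => ∑ i, chi (x i) * ((if β i = (b0, true) then 1 else 0) * Dl σ b0 i β x y) with hS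
  have hcard : (Fintype.card (B × Bool) : ℝ) = 2 * Fintype.card B := by
    rw [Fintype.card_prod, Fintype.card_bool]; push_cast; ring
  -- independence of the label of `i`
  have hind : ∀ i (β β' : ι → B × Bool), (∀ j, j ≠ i → β j = β' j) → ∀ x y,
      Dl σ b0 i β x y = Dl σ b0 i β' x y := by
    intro i β β' hb x y
    unfold Dl
    congr 1
    · apply hσ
      intro j hj
      simp only [mix, blk_apply, hb j hj, decide_eq_true_eq]
    · apply hσ
      intro j hj
      simp only [mix, blk_apply, hb j hj, decide_eq_true_eq]
  have h1 : Th f σ ((b0, true) : B × Bool) - Th f σ b0 =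
      ∑ i, av (fun β : ι → B × Bool => av (fun x => av (fun y => chi (x i) * f x * Dl σ b0 i β x y))) := by
    rw [Th_fst f σ b0]
    unfold Th
    rw [← Finset.sum_sub_distrib]
    refine Finset.sum_congr rfl fun i _ => ?_
    simp only [← av_sub]
    simp only [Dl, mul_sub]
  have h2 : ∀ i, av (fun β : ι → B × Bool => av (fun x => av (fun y => chi (x i) * f x * Dl σ b0 i β x y)))
      = (2 * Fintype.card B) * av (fun β : ι → B × Bool => av (fun x => av (fun y =>
        av (fun w => (f x - f (mix (blk β (b0, true)) x w)) *
         (chi (x i) * ((if β i = (b0, true) then 1 else 0) * Dl σ b0 i β x y)))))) := by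
    intro i
    rw [← av_indep i (fun β : ι → B × Bool => av (fun x => av (fun y => chi (x i) * f x * Dl σ b0 i β x y))) _
      ((b0, true) : B × Bool), hcard]
    · congr 1
      congr 1
      funext β
      rw [← av_mul_left]
      simp only [← av_mul_left]
      have hz : av (fun x => av (fun y => av (fun w => f (mix (blk β (b0, true)) x w) *
         (chi (x i) * ((if β i = (b0, true) then 1 else 0) * Dl σ b0 i β x y))))) = 0 := by
        by_cases hb : β i = (b0, true)
        · apply av_eq_zero_of_neg (xrE (pt i))
          intro x
          simp only [xrE, Equiv.coe_fn_mk, ← av_neg]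
          congr 1
          funext y
          congr 1
          funext w
          rw [xr_pt_same, Dl_flip _ _ _ _ _ _ _ hb, chi_not, mix_flip _ _ _ _ (by simp [blk_apply, hb])]
          ring
        · simp [hb, av_const]
      have hz2 : av (fun x => av (fun y => av (fun w => (f x - f (mix (blk β (b0, true)) x w)) *
         (chi (x i) * ((if β i = (b0, true) then 1 else 0) * Dl σ b0 i β x y))))) =
         av (fun x => av (fun y => av (fun w : ι → Bool => f x *
         (chi (x i) * ((if β i = (b0, true) then 1 else 0) * Dl σ b0 i β x y))))) -
         av (fun x => av (fun y => av (fun w => f (mix (blk β (b0, true)) x w) *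
         (chi (x i) * ((if β i = (b0, true) then 1 else 0) * Dl σ b0 i β x y))))) := by
        simp only [← av_sub]
        simp only [sub_mul]
      rw [hz2, hz, sub_zero]
      simp only [av_const]
      congr 1
      funext x
      congr 1
      funext y
      ring
    · intro β β' hb
      simp only [hind i β β' hb]
  have h3 : Th f σ ((b0, true) : B × Bool) - Th f σ b0 = (2 * Fintype.card B) *
      av (fun w : (ι → B × Bool) × (ι → Bool) × (ι → Bool) × (ι → Bool) =>
        (f w.2.1 - f (mix (blk w.1 (b0, true)) w.2.1 w.2.2.2)) * S w.1 w.2.1 w.2.2.1) := by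
    rw [h1]
    simp only [h2]
    rw [← Finset.mul_sum]
    congr 1
    simp only [av_prod, hS, Finset.mul_sum, av_sum]
  have hE1 : av (fun w : (ι → B × Bool) × (ι → Bool) × (ι → Bool) × (ι → Bool) =>
        (f w.2.1 - f (mix (blk w.1 (b0, true)) w.2.1 w.2.2.2)) ^ 2) =
        QQ f (((b0, true), true) : (B × Bool) × Bool) := by
    rw [← mixQ]
    simp only [av_prod, av_const]
  have hE2 : (2 * Fintype.card B) * av (fun w : (ι → B × Bool) × (ι → Bool) × (ι → Bool) × (ι → Bool) =>
        S w.1 w.2.1 w.2.2.1 ^ 2) = ∑ i, QQ (σ i) (((b0, false), true) : (B × Bool) × Bool) := by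
    simp only [av_prod, av_const]
    have ho : ∀ β y, av (fun x => S β x y ^ 2) = ∑ i, av (fun x =>
        ((if β i = (b0, true) then 1 else 0) * Dl σ b0 i β x y) ^ 2) := by
      intro β y
      apply orth
      intro i j x hij
      by_cases hb : β i = (b0, true)
      · rw [Dl_flip _ _ _ _ _ _ _ hb, Dl_flip _ _ _ _ _ _ _ hb]
      · simp [hb]
    have hc : ∀ β, av (fun x => av (fun y => S β x y ^ 2)) = ∑ i, av (fun x => av (fun y =>
        ((if β i = (b0, true) then 1 else 0) * Dl σ b0 i β x y) ^ 2)) := by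
      intro β
      rw [av_comm]
      simp only [ho, av_sum]
      exact Finset.sum_congr rfl fun i _ => av_comm _
    simp only [hc, av_sum]
    rw [Finset.mul_sum]
    refine Finset.sum_congr rfl fun i _ => ?_
    rw [← Dl_QQ, ← hcard]
    rw [← av_indep i (fun β : ι → B × Bool => av (fun x => av (fun y => Dl σ b0 i β x y ^ 2))) _
      ((b0, true) : B × Bool)]
    · congr 2
      funext β
      by_cases hb : β i = (b0, true) <;> simp [hb, av_const]
    · intro β β' hb
      simp only [hind i β β' hb]
  have h4 := av_cs (fun w : (ι → B × Bool) × (ι → Bool) × (ι → Bool) × (ι → Bool) =>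
        (f w.2.1 - f (mix (blk w.1 (b0, true)) w.2.1 w.2.2.2))) (fun w => S w.1 w.2.1 w.2.2.1)
  rw [hE1] at h4
  rw [h3, mul_pow, ← hE2]
  calc _ ≤ (2 * (Fintype.card B : ℝ)) ^ 2 * _ := mul_le_mul_of_nonneg_left h4 (sq_nonneg _)
    _ = _ := by ring

end Step
end PTF

namespace PTF

lemma sg_diff_sq_le (a b : ℝ) : (sg a - sg b) ^ 2 ≤ 4 := by
  rcases sg_cases a with h | h <;> rcases sg_cases b with h' | h' <;> rw [h, h'] <;> norm_num

lemma J_nonneg {ι : Type} [Fintype ι] [DecidableEq ι] (f : (ι → Bool) → ℝ) : 0 ≤ J f :=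
  Finset.sum_nonneg fun _ _ => av_nonneg fun _ => sq_nonneg _

lemma J_triv {ι : Type} [Fintype ι] [DecidableEq ι] (g : (ι → Bool) → ℝ) :
    J (fun x => sg (g x)) ≤ 4 * Fintype.card ι := by
  unfold J
  calc _ ≤ ∑ i : ι, (4 : ℝ) := by
        refine Finset.sum_le_sum fun i _ => ?_
        calc _ ≤ av (fun _ : ι → Bool => (4 : ℝ)) := av_mono fun x => sg_diff_sq_le _ _
          _ = 4 := av_const 4
    _ = _ := by simp; ring

lemma H_triv (d N : ℕ) : H d N (4 * Real.sqrt N) := by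
  intro ι _ _ h0 hN g hg
  refine (J_triv g).trans ?_
  have h1 : Real.sqrt (Fintype.card ι) * Real.sqrt (Fintype.card ι) = Fintype.card ι :=
    Real.mul_self_sqrt (by positivity)
  have h2 : Real.sqrt (Fintype.card ι) ≤ Real.sqrt N := Real.sqrt_le_sqrt (by exact_mod_cast hN)
  have h3 := Real.sqrt_nonneg (Fintype.card ι : ℝ)
  nlinarith

lemma H_mono {d N : ℕ} {X Y : ℝ} (h : H d N X) (hXY : X ≤ Y) : H d N Y := by
  intro ι _ _ h0 hN g hg
  exact (h ι h0 hN g hg).trans (mul_le_mul_of_nonneg_right hXY (Real.sqrt_nonneg _))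

lemma H_zero (N : ℕ) : H 0 N 0 := by
  intro ι _ _ h0 hN g hg
  unfold J
  have : ∀ x y, g x = g y := hg.const
  rw [zero_mul]
  apply le_of_eq
  apply Finset.sum_eq_zero
  intro i _
  have : ∀ x, (sg (g x) - sg (g (xr x (pt i)))) ^ 2 = 0 := by
    intro x
    rw [this x (xr x (pt i))]
    ring
  simp only [this, av_const]

section Ladder
variable {ι : Type} [Fintype ι] [DecidableEq ι] {d N : ℕ} {X X' : ℝ}

lemma sumQ {B : Type} [Fintype B] [DecidableEq B] [Nonempty B] (h2 : H d N X')
    (hB : Fintype.card B ≤ N) {g : (ι → Bool) → ℝ} (hg : Deg (d + 1) g) (l : B) :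
    (∑ i, QQ (fun x => sg (dv i g x)) l) * Fintype.card B ≤
      Fintype.card ι * (X' * Real.sqrt (Fintype.card B)) := by
  rw [Finset.sum_mul]
  calc _ ≤ ∑ i : ι, X' * Real.sqrt (Fintype.card B) :=
        Finset.sum_le_sum fun i _ => QQ_bound h2 hB (hg.deriv i) l
    _ = _ := by simp

lemma num_step (q Q b n X X' : ℝ) (hb : 0 < b) (hq0 : 0 ≤ q) (hQ0 : 0 ≤ Q)
    (hq : q * (4 * b) ≤ X * Real.sqrt (4 * b)) (hQ : Q * (4 * b) ≤ n * (X' * Real.sqrt (4 * b))) :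
    (2 * b) * q * Q ≤ n * X * X' / 2 := by
  have hss : Real.sqrt (4 * b) * Real.sqrt (4 * b) = 4 * b := Real.mul_self_sqrt (by positivity)
  have hm := mul_le_mul hq hQ (by positivity) (le_trans (by positivity) hq)
  have hm2 : q * Q * (16 * b ^ 2) ≤ n * X * X' * (4 * b) := by
    calc _ = q * (4 * b) * (Q * (4 * b)) := by ring
      _ ≤ _ := hm
      _ = n * X * X' * (Real.sqrt (4 * b) * Real.sqrt (4 * b)) := by ring
      _ = _ := by rw [hss]
  have : (8 * b) * ((2 * b) * q * Q) ≤ (8 * b) * (n * X * X' / 2) := by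
    nlinarith
  exact le_of_mul_le_mul_left this (by positivity)

lemma ladder (h1 : H (d + 1) N X) (h2 : H d N X') (hX' : 0 ≤ X')
    {g : (ι → Bool) → ℝ} (hg : Deg (d + 1) g) (k : ℕ) (hk : 2 ^ (k + 1) ≤ N) :
    ∃ (B : Type) (_ : Fintype B) (_ : DecidableEq B) (b0 : B), Fintype.card B = 2 ^ k ∧
      Th (fun x => sg (g x)) (fun i x => sg (dv i g x)) b0 ≤
        Real.sqrt (Fintype.card ι) + k * Real.sqrt (Fintype.card ι * X * X' / 2) := by
  induction k with
  | zero =>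
    refine ⟨Unit, inferInstance, inferInstance, (), by simp, ?_⟩
    have := Th_unit (fun x => sg (g x)) (fun i x => sg (dv i g x)) (fun x => sg_sq _) (fun i x => sg_sq _)
    simpa using this
  | succ k ih =>
    obtain ⟨B, _, _, b0, hB, hT⟩ := ih (le_trans (Nat.pow_le_pow_right (by norm_num) (by omega)) hk)
    refine ⟨B × Bool, inferInstance, inferInstance, (b0, true), ?_, ?_⟩
    · rw [Fintype.card_prod, Fintype.card_bool, hB, pow_succ]
    have : Nonempty B := ⟨b0⟩
    have hs := Th_step (fun x => sg (g x)) (fun i x => sg (dv i g x))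
      (fun i x y hxy => by rw [dv_congr i g hxy]) b0
    have hc : Fintype.card ((B × Bool) × Bool) ≤ N := by
      rw [Fintype.card_prod, Fintype.card_prod, Fintype.card_bool, hB]
      refine le_trans (le_of_eq ?_) hk
      ring
    have hq := QQ_bound h1 hc hg (((b0, true), true) : (B × Bool) × Bool)
    have hQ := sumQ h2 hc hg (((b0, false), true) : (B × Bool) × Bool)
    have hcr : (Fintype.card ((B × Bool) × Bool) : ℝ) = 4 * Fintype.card B := by
      rw [Fintype.card_prod, Fintype.card_prod, Fintype.card_bool]; push_cast; ring
    have hq0 := QQ_nonneg (fun x => sg (g x)) (((b0, true), true) : (B × Bool) × Bool)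
    have hQ0 : 0 ≤ ∑ i, QQ (fun x => sg (dv i g x)) (((b0, false), true) : (B × Bool) × Bool) :=
      Finset.sum_nonneg fun i _ => QQ_nonneg _ _
    rw [hcr] at hq hQ
    have hb : (0 : ℝ) < (Fintype.card B : ℝ) := by
      have : 0 < Fintype.card B := Fintype.card_pos
      exact_mod_cast this
    have hm3 := num_step _ _ _ _ _ _ hb hq0 hQ0 hq hQ
    have hf := Real.abs_le_sqrt (hs.trans hm3)
    have := (abs_le.mp hf).2
    push_cast
    linarith

lemma boot_one (h1 : H (d + 1) N X) (h2 : H d N X') (hX' : 0 ≤ X') (hX : 0 ≤ X) :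
    H (d + 1) N (4 + 4 * (Nat.log 2 N + 1 : ℕ) * Real.sqrt (X * X')) := by
  intro ι _ _ h0 hN g hg
  have hs1 : (1 : ℝ) ≤ Real.sqrt (Fintype.card ι) := by
    rw [Real.one_le_sqrt]; exact_mod_cast h0
  rcases Nat.lt_or_ge (Fintype.card ι) 2 with hlt | hge
  · have hc : Fintype.card ι = 1 := by omega
    have := J_triv g
    rw [hc] at this ⊢
    have hp : 0 ≤ 4 * (Nat.log 2 N + 1 : ℕ) * Real.sqrt (X * X') := by positivity
    simp at this ⊢
    push_cast at hp
    linarith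
  set n := Fintype.card ι with hn
  obtain ⟨K, hK⟩ : ∃ K, Nat.log 2 n = K + 1 := by
    have : 0 < Nat.log 2 n := Nat.log_pos (by norm_num) hge
    exact ⟨Nat.log 2 n - 1, by omega⟩
  have hK1 : 2 ^ (K + 1) ≤ n := by
    rw [← hK]; exact Nat.pow_log_le_self 2 (by omega)
  have hK2 : n < 2 ^ (K + 2) := by
    have := Nat.lt_pow_succ_log_self (b := 2) (by norm_num) n
    rwa [hK] at this
  obtain ⟨B, _, _, b0, hB, hT⟩ := ladder h1 h2 hX' hg K (hK1.trans hN)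
  have : Nonempty B := ⟨b0⟩
  have hJ := J_eq (fun x => sg (g x)) (fun i x => sg (dv i g x))
      (fun i x y hxy => by rw [dv_congr i g hxy]) (fun i x => sens_sign g i x)
  have hfin := Th_final (fun x => sg (g x)) (fun i x => sg (dv i g x))
      (fun i x y hxy => by rw [dv_congr i g hxy]) b0
  have hc : Fintype.card (B × Bool) = 2 ^ (K + 1) := by
    rw [Fintype.card_prod, Fintype.card_bool, hB, pow_succ]
  have hQ := sumQ h2 (by rw [hc]; exact hK1.trans hN) hg ((b0, true) : B × Bool)
  rw [hc] at hQ
  rw [← hn] at hT hQ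
  set S := ∑ i, av (fun x : ι → Bool => chi (x i) * sg (g x) * sg (dv i g x))
  have hQ0 : 0 ≤ ∑ i, QQ (fun x => sg (dv i g x)) ((b0, true) : B × Bool) :=
      Finset.sum_nonneg fun i _ => QQ_nonneg _ _
  set Q := ∑ i, QQ (fun x => sg (dv i g x)) ((b0, true) : B × Bool)
  have hJX := h1 ι h0 hN g hg
  have hJ0 := J_nonneg (fun x => sg (g x))
  push_cast at hQ
  set c : ℝ := 2 ^ (K + 1) with hcdef
  have hc0 : 0 < c := by positivity
  have hnc : (n : ℝ) ≤ 2 * c := by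
    have : (n : ℝ) ≤ 2 ^ (K + 2) := by exact_mod_cast hK2.le
    rw [hcdef]; calc _ ≤ _ := this
      _ = _ := by ring
  have hsn : Real.sqrt n ≤ 2 * Real.sqrt c := by
    calc Real.sqrt n ≤ Real.sqrt (2 ^ 2 * c) := Real.sqrt_le_sqrt (by linarith)
      _ = 2 * Real.sqrt c := by rw [Real.sqrt_mul (by norm_num), Real.sqrt_sq (by norm_num)]
  have hcc : Real.sqrt c * Real.sqrt c = c := Real.mul_self_sqrt hc0.le
  have hm : J (fun x => sg (g x)) / 4 * Q ≤ n * X * X' / 2 := by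
    have a1 : J (fun x => sg (g x)) * (Q * c) ≤ (X * Real.sqrt n) * (n * (X' * Real.sqrt c)) :=
      mul_le_mul hJX hQ (by positivity) (hJ0.trans hJX)
    have a2 : (X * Real.sqrt n) * (n * (X' * Real.sqrt c)) ≤ 2 * (n * X * X' * c) := by
      calc _ = (n * X * X' * Real.sqrt c) * Real.sqrt n := by ring
        _ ≤ (n * X * X' * Real.sqrt c) * (2 * Real.sqrt c) :=
            mul_le_mul_of_nonneg_left hsn (by positivity)
        _ = 2 * (n * X * X' * (Real.sqrt c * Real.sqrt c)) := by ring
        _ = _ := by rw [hcc]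
    have a3 : c * (J (fun x => sg (g x)) / 4 * Q) ≤ c * (n * X * X' / 2) := by nlinarith
    exact le_of_mul_le_mul_left a3 hc0
  have hf := Real.abs_le_sqrt (hfin.trans hm)
  have hf2 := (abs_le.mp hf).2
  have hsq : Real.sqrt (n * X * X' / 2) ≤ Real.sqrt n * Real.sqrt (X * X') := by
    rw [← Real.sqrt_mul (by positivity)]
    apply Real.sqrt_le_sqrt
    have : 0 ≤ n * X * X' := by positivity
    nlinarith
  have hKL : (K : ℝ) + 1 ≤ (Nat.log 2 N + 1 : ℕ) := by
    have : Nat.log 2 n ≤ Nat.log 2 N := Nat.log_mono_right hN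
    rw [hK] at this
    push_cast
    have : ((K + 1 : ℕ) : ℝ) ≤ Nat.log 2 N := by exact_mod_cast this
    push_cast at this
    linarith
  have hS : S ≤ Real.sqrt n + (K + 1) * Real.sqrt (n * X * X' / 2) := by linarith
  calc J (fun x => sg (g x)) = 4 * S := hJ
    _ ≤ 4 * (Real.sqrt n + (K + 1) * Real.sqrt (n * X * X' / 2)) := by linarith
    _ ≤ 4 * (Real.sqrt n + (Nat.log 2 N + 1 : ℕ) * (Real.sqrt n * Real.sqrt (X * X'))) := by
        gcongr
    _ = _ := by ring

lemma boot (h2 : H d N X') (hX' : 0 ≤ X') :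
    H (d + 1) N (8 + 16 * ((Nat.log 2 N + 1 : ℕ) : ℝ) ^ 2 * X') := by
  set L : ℝ := ((Nat.log 2 N + 1 : ℕ) : ℝ) with hL
  have hL0 : 0 ≤ L := by positivity
  set S : Set ℝ := {X | 0 ≤ X ∧ H (d + 1) N X} with hS
  have hne : S.Nonempty := ⟨4 * Real.sqrt N, by positivity, H_triv _ _⟩
  have hbd : BddBelow S := ⟨0, fun X hX => hX.1⟩
  have hmem : sInf S ∈ S := by
    refine ⟨le_csInf hne fun X hX => hX.1, ?_⟩
    intro ι _ _ h0 hN g hg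
    have hs : 0 < Real.sqrt (Fintype.card ι) := Real.sqrt_pos.mpr (by exact_mod_cast h0)
    rw [← div_le_iff₀ hs]
    apply le_csInf hne
    intro X hX
    rw [div_le_iff₀ hs]
    exact hX.2 ι h0 hN g hg
  set Y := sInf S with hY
  have h3 := boot_one hmem.2 h2 hX' hmem.1
  rw [← hL] at h3
  have h4 : Y ≤ 4 + 4 * L * Real.sqrt (Y * X') := csInf_le hbd ⟨by positivity, h3⟩
  have h5 : Y ≤ 8 + 16 * L ^ 2 * X' := by
    rw [Real.sqrt_mul hmem.1] at h4
    have e1 := Real.sq_sqrt hmem.1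
    have e2 := Real.sq_sqrt hX'
    set s := Real.sqrt Y
    set t := Real.sqrt X'
    nlinarith [sq_nonneg (s - 4 * L * t)]
  exact H_mono hmem.2 h5

end Ladder

/-- Kane's bound on the average sensitivity. -/
theorem H_main (d N : ℕ) : H d N ((24 * ((Nat.log 2 N + 1 : ℕ) : ℝ) ^ 2) ^ d) := by
  set L : ℝ := ((Nat.log 2 N + 1 : ℕ) : ℝ) with hL
  have hL1 : 1 ≤ L := by rw [hL]; exact_mod_cast Nat.le_add_left 1 _
  induction d with
  | zero => exact H_mono (H_zero N) (by simp)
  | succ d ih =>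
    have hp : 1 ≤ (24 * L ^ 2) ^ d := one_le_pow₀ (by nlinarith)
    refine H_mono (boot ih (by positivity)) ?_
    rw [← hL, pow_succ (24 * L ^ 2) d]
    set P := (24 * L ^ 2) ^ d
    have : 1 ≤ L ^ 2 := one_le_pow₀ hL1
    nlinarith

end PTF

namespace PTF
section Det
variable {ι : Type}

lemma sum_par (d : ℕ) : ∑ z : Fin (d + 1) → Bool, par z = 0 := by
  unfold par
  rw [← Fintype.piFinset_univ, ← Finset.prod_univ_sum]
  simp [chi]

lemma abs_par {k : ℕ} (z : Fin k → Bool) : |par z| = 1 := by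
  unfold par
  rw [Finset.abs_prod]
  apply Finset.prod_eq_one
  intro t _
  cases z t <;> simp [chi]

/-- a sum with one dominating term does not vanish -/
lemma dominate {d : ℕ} (W : (Fin (d + 1) → Bool) → ℝ) (ε w : ℝ)
    (h : ∑ z, par z * W z = 0) (hw : ∀ z, (∃ t, z t = true) → |W z - w| ≤ ε) :
    |W (fun _ => false) - w| ≤ ((2 : ℝ) ^ (d + 1) - 1) * ε := by
  have h1 : ∑ z, par z * (W z - w) = 0 := by
    simp only [mul_sub, Finset.sum_sub_distrib, h, ← Finset.sum_mul, sum_par]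
    ring
  rw [← Finset.add_sum_erase univ _ (Finset.mem_univ (fun _ : Fin (d + 1) => false))] at h1
  have h2 : |W (fun _ => false) - w| =
      |∑ z ∈ univ.erase (fun _ : Fin (d + 1) => false), par z * (W z - w)| := by
    have : par (fun _ : Fin (d + 1) => false) * (W (fun _ => false) - w) =
      - ∑ z ∈ univ.erase (fun _ : Fin (d + 1) => false), par z * (W z - w) := by linarith
    rw [← abs_neg (∑ z ∈ _, _), ← this, abs_mul, abs_par, one_mul]
  rw [h2]
  calc _ ≤ ∑ z ∈ univ.erase (fun _ : Fin (d + 1) => false), |par z * (W z - w)| :=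
        Finset.abs_sum_le_sum_abs _ _
    _ ≤ ∑ z ∈ univ.erase (fun _ : Fin (d + 1) => false), ε := by
        refine Finset.sum_le_sum fun z hz => ?_
        rw [abs_mul, abs_par, one_mul]
        apply hw
        by_contra hcon
        push Not at hcon
        apply (Finset.mem_erase.mp hz).1
        funext t
        simpa using hcon t
    _ = _ := by
        rw [Finset.sum_const, Finset.card_erase_of_mem (Finset.mem_univ _), nsmul_eq_mul]
        simp [Finset.card_univ]

/-- the robustness constant -/
noncomputable def cc (d : ℕ) : ℝ := (1 / 2) ^ (d + 1)

lemma cc_pos (d : ℕ) : 0 < cc d := by unfold cc; positivity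

lemma cc_le (d : ℕ) : cc d ≤ 1 / 2 := by
  unfold cc
  rw [pow_succ]
  have : ((1 : ℝ) / 2) ^ d ≤ 1 := pow_le_one₀ (by norm_num) (by norm_num)
  linarith

lemma two_cc (d : ℕ) : (2 : ℝ) ^ (d + 1) * cc d = 1 := by
  unfold cc
  rw [← mul_pow]; norm_num

lemma robust [DecidableEq ι] {d : ℕ} {p : (ι → Bool) → ℝ} (hp : Deg d p) (x : ι → Bool) (i : ι)
    (hx : 0 < p x) (hi : p (xr x (pt i)) < 0) (γ : ι → Option (Fin (d + 1))) :
    ∃ z : Fin (d + 1) → Bool, (∃ t, z t = true) ∧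
      ((1 + cc d) * p x ≤ p (xr (xr x (pb γ (ex z))) (pt i)) ∨
        p (xr (xr x (pb γ (ex z))) (pt i)) ≤ (1 - cc d) * p x) := by
  by_contra hcon
  push Not at hcon
  have h1 := hp γ (xr x (pt i))
  have h2 := dominate (fun z => p (xr (xr x (pt i)) (pb γ (ex z)))) (cc d * p x) (p x) h1 (by
    intro z hz
    have := hcon z hz
    rw [xr_right_comm, abs_le]
    constructor <;> linarith)
  have h3 : xr (xr x (pt i)) (pb γ (ex (fun _ : Fin (d + 1) => false))) = xr x (pt i) := by
    funext j
    have : pb γ (ex (fun _ : Fin (d + 1) => false)) j = false := by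
      simp only [pb]
      cases γ j <;> rfl
    simp only [xr, this, Bool.xor_false]
  rw [h3] at h2
  have h4 := (abs_le.mp h2).1
  have h5 := two_cc d
  have h6 : ((2 : ℝ) ^ (d + 1) - 1) * (cc d * p x) = p x - cc d * p x := by
    linear_combination (p x) * h5
  have := mul_pos (cc_pos d) hx
  linarith

/-- labels -/
abbrev Lab (Rw : Type) (k q : ℕ) : Type := (Rw × Fin k) ⊕ Fin q

variable {Rw : Type} [DecidableEq Rw] {k q : ℕ}

/-- pattern on the special labels -/
def sp (y : Rw × Fin k → Bool) : Lab Rw k q → Bool := Sum.elim y (fun _ => false)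

/-- pattern on one row -/
def rp (j : Rw) (z : Fin k → Bool) : Lab Rw k q → Bool :=
  sp (fun w => decide (w.1 = j) && z w.2)

/-- `x, β` is good -/
def Good (d : ℕ) (p : (ι → Bool) → ℝ) (x : ι → Bool) (β : ι → Lab Rw k q) : Prop :=
  ∀ j : Rw, ∃ z : Fin k → Bool, (1 + cc d) * p x ≤ p (xr x (pb β (rp j z))) ∨
    p (xr x (pb β (rp j z))) ≤ (1 - cc d) * p x

/-- no test changes its sign -/
def Quiet (d : ℕ) (p : (ι → Bool) → ℝ) (x : ι → Bool) (β : ι → Lab Rw k q) : Prop :=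
  (∀ y, sg (p x) = sg (p (xr x (pb β (sp y))))) ∧
  (∀ j z y, (∀ t, y (j, t) = false) →
    sg (tst p (rp j z) 1 (-(1 + cc d)) β x) =
      sg (tst p (rp j z) 1 (-(1 + cc d)) β (xr x (pb β (sp y))))) ∧
  (∀ j z y, (∀ t, y (j, t) = false) →
    sg (tst p (rp j z) (-1) (1 - cc d) β x) =
      sg (tst p (rp j z) (-1) (1 - cc d) β (xr x (pb β (sp y)))))

lemma sg_nonneg_of {a b : ℝ} (ha : 0 ≤ a) (h : sg a = sg b) : 0 ≤ b := by
  unfold sg at h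
  rw [if_pos ha] at h
  split_ifs at h with hb
  · exact hb
  · norm_num at h

lemma det {d m : ℕ} {p : (ι → Bool) → ℝ} (hp : Deg d p) (x : ι → Bool) (hx : 0 < p x)
    (β : ι → Lab (Fin (d + 1) × Fin m) (d + 1) q) (hm : (2 : ℝ) ^ (d + 1) * (1 / (1 + cc d)) ^ m < 1)
    (hG : Good d p x β) (hQ : Quiet d p x β) : False := by
  classical
  obtain ⟨hQ1, hQ2, hQ3⟩ := hQ
  choose z hz using hG
  set lam : ℝ := 1 / (1 + cc d) with hlam
  have hc0 := cc_pos d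
  have hc1 := cc_le d
  have hl0 : 0 < lam := by positivity
  have hl1 : lam * (1 + cc d) = 1 := by rw [hlam]; field_simp
  have hl2 : 1 - cc d ≤ lam := by
    rw [hlam, le_div_iff₀ (by linarith)]
    nlinarith
  have hl3 : lam ≤ 1 := by nlinarith
  set pat : (Fin (d + 1) × Fin m → Bool) → (Fin (d + 1) × Fin m) × Fin (d + 1) → Bool :=
    fun S w => S w.1 && z w.1 w.2 with hpat
  set W : (Fin (d + 1) × Fin m → Bool) → ℝ := fun S => p (xr x (pb β (sp (pat S)))) with hW
  have hW0 : ∀ S, 0 ≤ W S := fun S => sg_nonneg_of hx.le (hQ1 (pat S))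
  -- moving one row
  have hmove : ∀ (S : Fin (d + 1) × Fin m → Bool) (j), S j = false →
      xr (xr x (pb β (sp (pat S)))) (pb β (rp j (z j))) = xr x (pb β (sp (pat (xr S (pt j))))) := by
    intro S j hS
    rw [xr_assoc, ← pb_xr]
    congr 2
    funext l
    rcases l with ⟨r, t⟩ | a
    · by_cases hr : r = j
      · subst hr
        simp [xr, rp, sp, hpat, pt, hS]
      · simp [xr, rp, sp, hpat, pt, hr]
    · simp [xr, rp, sp]
  have hoff : ∀ (S : Fin (d + 1) × Fin m → Bool) (j), S j = false → ∀ t, pat S (j, t) = false := by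
    intro S j hS t
    simp [hpat, hS]
  have hup : ∀ j, (1 + cc d) * p x ≤ p (xr x (pb β (rp j (z j)))) → ∀ S, S j = false →
      (1 + cc d) * W S ≤ W (xr S (pt j)) := by
    intro j hj S hS
    have h1 := hQ2 j (z j) (pat S) (hoff S j hS)
    have h2 := sg_nonneg_of (by unfold tst; linarith) h1
    unfold tst at h2
    rw [hmove S j hS] at h2
    simp only [hW]
    linarith
  have hdown : ∀ j, p (xr x (pb β (rp j (z j)))) ≤ (1 - cc d) * p x → ∀ S, S j = false →
      W (xr S (pt j)) ≤ (1 - cc d) * W S := by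
    intro j hj S hS
    have h1 := hQ3 j (z j) (pat S) (hoff S j hS)
    have h2 := sg_nonneg_of (by unfold tst; linarith) h1
    unfold tst at h2
    rw [hmove S j hS] at h2
    simp only [hW]
    linarith
  -- the extremal pattern
  set T : Fin (d + 1) × Fin m → Bool :=
    fun j => decide ((1 + cc d) * p x ≤ p (xr x (pb β (rp j (z j))))) with hT
  have hstep : ∀ (S : Fin (d + 1) × Fin m → Bool) (j), S j = T j → W (xr S (pt j)) ≤ lam * W S := by
    intro S j hS
    by_cases hj : (1 + cc d) * p x ≤ p (xr x (pb β (rp j (z j))))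
    · have hSj : S j = true := by rw [hS, hT]; simpa using hj
      have := hup j hj (xr S (pt j)) (by rw [xr_pt_same, hSj]; rfl)
      rw [xr_self_right] at this
      calc W (xr S (pt j)) = lam * ((1 + cc d) * W (xr S (pt j))) := by
            rw [← mul_assoc, hl1, one_mul]
        _ ≤ _ := mul_le_mul_of_nonneg_left this hl0.le
    · have hSj : S j = false := by rw [hS, hT]; simpa using hj
      have h1 := (hz j).resolve_left hj
      exact (hdown j h1 S hSj).trans (mul_le_mul_of_nonneg_right hl2 (hW0 S))
  have hind : ∀ E : Finset (Fin (d + 1) × Fin m),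
      W (xr T (fun j => decide (j ∈ E))) ≤ lam ^ E.card * W T := by
    intro E
    induction E using Finset.induction_on with
    | empty =>
      have : xr T (fun j => decide (j ∈ (∅ : Finset (Fin (d + 1) × Fin m)))) = T := by
        funext j; simp [xr]
      rw [this]; simp
    | insert j E hj ih =>
      have e : xr T (fun i => decide (i ∈ insert j E)) = xr (xr T (fun i => decide (i ∈ E))) (pt j) := by
        funext i
        by_cases hi : i = j
        · subst hi; simp [xr, pt, hj]
        · simp [xr, pt, hi]
      rw [e, Finset.card_insert_of_notMem hj, pow_succ]
      have := hstep (xr T (fun i => decide (i ∈ E))) j (by simp [xr, hj])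
      calc _ ≤ _ := this
        _ ≤ lam * (lam ^ E.card * W T) := mul_le_mul_of_nonneg_left ih hl0.le
        _ = _ := by ring
  have hTpos : 0 < W T := by
    have h1 := hind (univ.filter (fun j => T j = true))
    have e1 : xr T (fun j => decide (j ∈ univ.filter (fun j => T j = true))) = fun _ => false := by
      funext j; simp [xr]
    have e2 : W (fun _ => false) = p x := by
      simp only [hW]
      congr 1
      funext i
      simp only [xr, pb]
      have : ∀ l : Lab (Fin (d + 1) × Fin m) (d + 1) q, sp (pat (fun _ => false)) l = false := by
        intro l
        rcases l with w | a <;> simp [sp, hpat]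
      rw [this]; simp
    rw [e1, e2] at h1
    by_contra hcon
    have h0 : W T = 0 := le_antisymm (not_lt.mp hcon) (hW0 T)
    rw [h0] at h1
    linarith
  -- the difference identity
  set γ : ι → Option (Fin (d + 1)) := fun i =>
    Sum.elim (fun w => if z w.1 w.2 then some w.1.1 else none) (fun _ => none) (β i) with hγ
  have hsum := hp γ (xr x (pb β (sp (pat T))))
  have hWe : ∀ v : Fin (d + 1) → Bool, p (xr (xr x (pb β (sp (pat T)))) (pb γ (ex v))) =
      W (xr T (fun j => v j.1)) := by
    intro v
    simp only [hW]
    congr 1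
    rw [xr_assoc]
    congr 1
    funext i
    simp only [xr, pb, hγ]
    rcases β i with w | a
    · cases hzw : z w.1 w.2 <;> simp [sp, hpat, hzw, ex, xr]
    · simp [sp, ex]
  simp only [hWe] at hsum
  have hdom := dominate (fun v => W (xr T (fun j => v j.1))) (lam ^ m * W T) 0 hsum (by
    rintro v ⟨t, ht⟩
    rw [sub_zero, abs_of_nonneg (hW0 _)]
    have h1 := hind (univ.filter (fun j => v j.1 = true))
    have e1 : xr T (fun j => decide (j ∈ univ.filter (fun j : Fin (d + 1) × Fin m => v j.1 = true))) =
        xr T (fun j => v j.1) := by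
      funext j; simp [xr]
    rw [e1] at h1
    refine h1.trans (mul_le_mul_of_nonneg_right ?_ hTpos.le)
    apply pow_le_pow_of_le_one hl0.le hl3
    calc m = ((univ : Finset (Fin m)).map ⟨fun a => (t, a), fun a b h => by simpa using h⟩).card := by simp
      _ ≤ _ := by
        apply Finset.card_le_card
        intro j hj
        simp only [Finset.mem_map, Finset.mem_univ, true_and] at hj
        obtain ⟨a, rfl⟩ := hj
        exact Finset.mem_filter.mpr ⟨Finset.mem_univ _, ht⟩)
  have e0 : xr T (fun _ => false) = T := by funext j; simp [xr]
  rw [sub_zero, e0, abs_of_nonneg (hW0 _)] at hdom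
  have hlm : 0 < lam ^ m * W T := by positivity
  have h1 := mul_lt_mul_of_pos_right hm hTpos
  linarith

end Det
end PTF

namespace PTF
section Count
variable {ι : Type} [Fintype ι] [DecidableEq ι] {Rw : Type} [Fintype Rw] [DecidableEq Rw] {q : ℕ}

/-- replant the labels of the chosen sensitive coordinates -/
noncomputable def plant {k : ℕ} (e : Rw × Fin q → ι) (v : Rw → Fin q) (τ : Rw → Fin k)
    (β0 : ι → Lab Rw k q) (i : ι) : Lab Rw k q :=
  open scoped Classical in
  if h : ∃ j, e (j, v j) = i then Sum.inl (h.choose, τ h.choose) else β0 i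

lemma plant_at {k : ℕ} {e : Rw × Fin q → ι} (he : Function.Injective e) (v : Rw → Fin q) (τ : Rw → Fin k)
    (β0 : ι → Lab Rw k q) (j : Rw) : plant e v τ β0 (e (j, v j)) = Sum.inl (j, τ j) := by
  unfold plant
  have h : ∃ j', e (j', v j') = e (j, v j) := ⟨j, rfl⟩
  rw [dif_pos h]
  have := he h.choose_spec
  rw [Prod.ext_iff] at this
  have h1 : h.choose = j := this.1
  rw [h1]

lemma plant_off {k : ℕ} (e : Rw × Fin q → ι) (v : Rw → Fin q) (τ : Rw → Fin k)
    (β0 : ι → Lab Rw k q) (i : ι) (h : ∀ j, e (j, v j) ≠ i) : plant e v τ β0 i = β0 i := by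
  unfold plant
  rw [dif_neg (by push Not; exact h)]

/-- labellings with non-special labels on the range of `e` -/
noncomputable def Free (k : ℕ) (e : Rw × Fin q → ι) : Finset (ι → Lab Rw k q) :=
  open scoped Classical in
  Fintype.piFinset (fun i => if ∃ w, e w = i then univ.image Sum.inr else univ)

lemma Free_inr {k : ℕ} {e : Rw × Fin q → ι} {β0 : ι → Lab Rw k q} (h : β0 ∈ Free k e) (w : Rw × Fin q) :
    ∃ a, β0 (e w) = Sum.inr a := by
  have h1 := Fintype.mem_piFinset.mp h (e w)
  rw [if_pos ⟨w, rfl⟩] at h1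
  obtain ⟨a, _, ha⟩ := Finset.mem_image.mp h1
  exact ⟨a, ha.symm⟩

lemma Free_card {k : ℕ} {e : Rw × Fin q → ι} (he : Function.Injective e) :
    (Free k e).card * Fintype.card (Lab Rw k q) ^ (Fintype.card Rw * q) =
      q ^ (Fintype.card Rw * q) * Fintype.card (Lab Rw k q) ^ Fintype.card ι := by
  classical
  unfold Free
  rw [Fintype.card_piFinset]
  have h1 : ∀ i : ι, (if ∃ w, e w = i then univ.image (Sum.inr : Fin q → Lab Rw k q) else univ).card =
      if ∃ w, e w = i then q else Fintype.card (Lab Rw k q) := by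
    intro i
    split_ifs
    · rw [Finset.card_image_of_injective _ Sum.inr_injective]; simp
    · exact Finset.card_univ
  have h2 : (univ.filter (fun i : ι => ∃ w, e w = i)).card = Fintype.card Rw * q := by
    have : univ.filter (fun i : ι => ∃ w, e w = i) = univ.image e := by
      ext i; simp
    rw [this, Finset.card_image_of_injective _ he]
    simp [Finset.card_univ]
  have h3 := Finset.card_filter_add_card_filter_not (s := (univ : Finset ι)) (fun i : ι => ∃ w, e w = i)
  rw [h2, Finset.card_univ] at h3
  rw [← h3, pow_add]
  have h4 : (∏ i : ι, (if ∃ w, e w = i then univ.image (Sum.inr : Fin q → Lab Rw k q) else univ).card) =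
      q ^ (Fintype.card Rw * q) * Fintype.card (Lab Rw k q) ^ (univ.filter (fun i : ι => ¬ ∃ w, e w = i)).card := by
    rw [Finset.prod_congr rfl fun i _ => h1 i, Finset.prod_ite, Finset.prod_const, Finset.prod_const, h2]
  have h5 : ∀ A B C : ℕ, A = B * C → ∀ D, A * D = B * (D * C) := by
    intro A B C h D; rw [h]; ring
  convert h5 _ _ _ h4 _ using 3

lemma good_count {d : ℕ} {p : (ι → Bool) → ℝ} (hp : Deg d p) (x : ι → Bool) (hx : 0 < p x)
    {e : Rw × Fin q → ι} (he : Function.Injective e) (hq : 0 < q) (hs : ∀ w, p (xr x (pt (e w))) < 0) :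
    (Free (d + 1) e).card ≤
      (univ.filter (fun β : ι → Lab Rw (d + 1) q => Good d p x β)).card := by
  classical
  -- planting yields good labellings
  have hτ : ∀ (v : Rw → Fin q) (β0 : ι → Lab Rw (d + 1) q), β0 ∈ Free (d + 1) e →
      ∃ τ : Rw → Fin (d + 1), Good d p x (plant e v τ β0) := by
    intro v β0 h0
    have h1 : ∀ j, ∃ z : Fin (d + 1) → Bool, (∃ t, z t = true) ∧
      ((1 + cc d) * p x ≤ p (xr (xr x (pb β0 (rp j z))) (pt (e (j, v j)))) ∨
        p (xr (xr x (pb β0 (rp j z))) (pt (e (j, v j)))) ≤ (1 - cc d) * p x) := by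
      intro j
      set γ : ι → Option (Fin (d + 1)) := fun i =>
        Sum.elim (fun w => if w.1 = j then some w.2 else none) (fun _ => none) (β0 i) with hγ
      obtain ⟨z, hz1, hz2⟩ := robust hp x (e (j, v j)) hx (hs _) γ
      refine ⟨z, hz1, ?_⟩
      have : pb β0 (rp j z) = pb γ (ex z) := by
        funext i
        simp only [pb, hγ]
        rcases β0 i with w | a
        · by_cases hw : w.1 = j <;> simp [rp, sp, hw, ex]
        · simp [rp, sp, ex]
      rw [this]
      exact hz2
    choose z hz1 hz2 using h1
    choose τ hτ using hz1
    refine ⟨τ, fun j => ⟨z j, ?_⟩⟩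
    have : xr x (pb (plant e v τ β0) (rp j (z j))) = xr (xr x (pb β0 (rp j (z j)))) (pt (e (j, v j))) := by
      rw [xr_assoc]
      congr 1
      funext i
      by_cases hi : ∃ j', e (j', v j') = i
      · obtain ⟨j', rfl⟩ := hi
        obtain ⟨a, ha⟩ := Free_inr h0 (j', v j')
        simp only [xr, pb, plant_at he, ha, pt]
        by_cases hj : j' = j
        · subst hj; simp [rp, sp, hτ]
        · have : e (j', v j') ≠ e (j, v j) := fun h => hj (by
            have := he h; rw [Prod.ext_iff] at this; exact this.1)
          simp [rp, sp, hj, this]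
      · push Not at hi
        simp only [xr, pb, plant_off e v τ β0 i hi, pt]
        simp [(hi j).symm]
    rw [this]
    exact hz2 j
  choose! τ hτ using hτ
  set F : (Rw → Fin q) × (ι → Lab Rw (d + 1) q) → (ι → Lab Rw (d + 1) q) × (Rw → Fin q) :=
    fun u => (plant e u.1 (τ u.1 u.2) u.2, fun j => Sum.elim (fun _ => u.1 j) id (u.2 (e (j, u.1 j)))) with hF
  have hcard : ((univ : Finset (Rw → Fin q)) ×ˢ Free (d + 1) e).card ≤
      ((univ.filter (fun β : ι → Lab Rw (d + 1) q => Good d p x β)) ×ˢ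
        (univ : Finset (Rw → Fin q))).card := by
    apply Finset.card_le_card_of_injOn F
    · intro u hu
      have hu2 := (Finset.mem_product.mp hu).2
      simp only [hF, Finset.coe_product, Set.mem_prod, Finset.mem_coe, Finset.mem_filter, Finset.mem_univ, true_and, and_true]
      exact hτ u.1 u.2 hu2
    · rintro ⟨v, β0⟩ hu ⟨v', β0'⟩ hu' hFF
      have h0 := (Finset.mem_product.mp hu).2
      have h0' := (Finset.mem_product.mp hu').2
      simp only at h0 h0'
      simp only [hF, Prod.mk.injEq] at hFF
      obtain ⟨hβ, hθ⟩ := hFF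
      have hv : v = v' := by
        funext j
        have h1 := congrFun hβ (e (j, v j))
        rw [plant_at he] at h1
        by_cases hj : ∃ j', e (j', v' j') = e (j, v j)
        · obtain ⟨j', hj'⟩ := hj
          have := he hj'
          rw [Prod.ext_iff] at this
          obtain ⟨h2, h3⟩ := this
          simp only at h2 h3
          subst h2
          exact h3.symm
        · push Not at hj
          rw [plant_off e v' _ β0' _ hj] at h1
          obtain ⟨a, ha⟩ := Free_inr h0' (j, v j)
          rw [ha] at h1
          exact absurd h1 (by simp)
      subst hv
      have hb : β0 = β0' := by
        funext i
        by_cases hi : ∃ j, e (j, v j) = i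
        · obtain ⟨j, rfl⟩ := hi
          have h1 := congrFun hθ j
          obtain ⟨a, ha⟩ := Free_inr h0 (j, v j)
          obtain ⟨a', ha'⟩ := Free_inr h0' (j, v j)
          rw [ha, ha'] at h1 ⊢
          simpa using h1
        · push Not at hi
          have h1 := congrFun hβ i
          rwa [plant_off _ _ _ _ _ hi, plant_off _ _ _ _ _ hi] at h1
      rw [hb]
  rw [Finset.card_product, Finset.card_product, mul_comm] at hcard
  have hpos : 0 < (univ : Finset (Rw → Fin q)).card := by
    rw [Finset.card_univ, Fintype.card_fun, Fintype.card_fin]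
    exact pow_pos hq _
  exact Nat.le_of_mul_le_mul_right hcard hpos

end Count
end PTF

namespace PTF
section Tail
variable {ι : Type} [Fintype ι] [DecidableEq ι]

section EPs
variable {B : Type} [Fintype B] [DecidableEq B]

/-- probability (times four) that a test changes sign when the pattern `y` is flipped -/
noncomputable def EP (g : (ι → Bool) → ℝ) (u : B → Bool) (a c : ℝ) (y : B → Bool) : ℝ :=
  av (fun β : ι → B => av (fun x : ι → Bool =>
    (sg (tst g u a c β x) - sg (tst g u a c β (xr x (pb β y)))) ^ 2))

lemma sg_tri (a b c : ℝ) : (sg a - sg c) ^ 2 ≤ (sg a - sg b) ^ 2 + (sg b - sg c) ^ 2 := by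
  rcases sg_cases a with h | h <;> rcases sg_cases b with h' | h' <;>
    rcases sg_cases c with h'' | h'' <;> rw [h, h', h''] <;> norm_num

lemma EP_le (g : (ι → Bool) → ℝ) (u : B → Bool) (a c : ℝ) (T : Finset B) :
    EP g u a c (fun l => decide (l ∈ T)) ≤ ∑ l ∈ T, edgeP g u a c l := by
  induction T using Finset.induction_on with
  | empty =>
    have : ∀ (β : ι → B) x, xr x (pb β (fun l => decide (l ∈ (∅ : Finset B)))) = x := by
      intro β x; funext i; simp [xr, pb]
    simp only [EP, this, sub_self]
    simp [av]
  | insert l T hl ih =>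
    rw [Finset.sum_insert hl]
    have e : ∀ (β : ι → B) x, xr x (pb β (fun l' => decide (l' ∈ insert l T))) =
        xr (xr x (pb β (fun l' => decide (l' ∈ T)))) (pb β (pt l)) := by
      intro β x
      rw [xr_assoc, ← pb_xr]
      congr 2
      funext l'
      by_cases h : l' = l
      · subst h; simp [xr, pt, hl]
      · simp [xr, pt, h]
    have h1 : EP g u a c (fun l' => decide (l' ∈ insert l T)) ≤
        EP g u a c (fun l' => decide (l' ∈ T)) + edgeP g u a c l := by
      have h2 : edgeP g u a c l = av (fun β : ι → B => av (fun x : ι → Bool =>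
          (sg (tst g u a c β (xr x (pb β (fun l' => decide (l' ∈ T))))) -
           sg (tst g u a c β (xr (xr x (pb β (fun l' => decide (l' ∈ T)))) (pb β (pt l))))) ^ 2)) := by
        unfold edgeP
        congr 1
        funext β
        exact (av_xr (pb β (fun l' => decide (l' ∈ T))) _).symm
      rw [h2]
      unfold EP
      rw [← av_add]
      apply av_mono
      intro β
      rw [← av_add]
      apply av_mono
      intro x
      rw [e]
      exact sg_tri _ _ _
    linarith

end EPs

variable {Rw : Type} [Fintype Rw] [DecidableEq Rw] {k q : ℕ}

lemma EP_sp {d N : ℕ} {X : ℝ} (hH : H d N X) (hX : 0 ≤ X) (hq : 0 < q)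
    (hB : Fintype.card (Lab Rw k q) ≤ N) {g : (ι → Bool) → ℝ} (hg : Deg d g) (u : Lab Rw k q → Bool)
    (a c : ℝ) (hu : ∀ t, u (Sum.inr t) = false) (y : Rw × Fin k → Bool)
    (hy : ∀ w, y w = true → u (Sum.inl w) = false) :
    EP g u a c (sp y) * q ≤
      Fintype.card (Rw × Fin k) * (X * Real.sqrt (Fintype.card (Lab Rw k q))) := by
  have hne : Nonempty (Lab Rw k q) := ⟨Sum.inr ⟨0, hq⟩⟩
  set T : Finset (Lab Rw k q) := univ.filter (fun l => sp y l = true) with hT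
  have hyT : (sp y : Lab Rw k q → Bool) = fun l => decide (l ∈ T) := by
    funext l; simp [hT]
  have h1 := EP_le g u a c T
  rw [← hyT] at h1
  have hqr : (q : ℝ) ≤ (univ.filter (fun l' : Lab Rw k q => u l' = false)).card := by
    have : ((univ : Finset (Fin q)).image (Sum.inr : Fin q → Lab Rw k q)).card = q := by
      rw [Finset.card_image_of_injective _ Sum.inr_injective]; simp
    have h2 : q ≤ (univ.filter (fun l' : Lab Rw k q => u l' = false)).card := by
      calc q = ((univ : Finset (Fin q)).image (Sum.inr : Fin q → Lab Rw k q)).card := this.symm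
        _ ≤ _ := by
          apply Finset.card_le_card
          intro l hl
          obtain ⟨t, _, rfl⟩ := Finset.mem_image.mp hl
          simp [hu]
    exact_mod_cast h2
  have h2 : ∀ l ∈ T, edgeP g u a c l * q ≤ X * Real.sqrt (Fintype.card (Lab Rw k q)) := by
    intro l hl
    have hl' : u l = false := by
      rcases l with w | t
      · exact hy w (Finset.mem_filter.mp hl).2
      · exact hu t
    exact (mul_le_mul_of_nonneg_left hqr (edgeP_nonneg _ _ _ _ _)).trans (edge_bound hH hB hg u a c l hl')
  have hTc : T.card ≤ Fintype.card (Rw × Fin k) := by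
    calc T.card ≤ ((univ : Finset (Rw × Fin k)).image (Sum.inl : _ → Lab Rw k q)).card := by
          apply Finset.card_le_card
          intro l hl
          rcases l with w | t
          · simp
          · exact absurd (Finset.mem_filter.mp hl).2 (by simp [sp])
      _ ≤ _ := Finset.card_image_le
  calc _ ≤ (∑ l ∈ T, edgeP g u a c l) * q := mul_le_mul_of_nonneg_right h1 (by positivity)
    _ = ∑ l ∈ T, edgeP g u a c l * q := Finset.sum_mul _ _ _
    _ ≤ ∑ l ∈ T, X * Real.sqrt (Fintype.card (Lab Rw k q)) := Finset.sum_le_sum h2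
    _ = T.card * (X * Real.sqrt (Fintype.card (Lab Rw k q))) := by simp
    _ ≤ _ := by gcongr

/-- total number of changes of tests -/
noncomputable def Tsum (d : ℕ) (p : (ι → Bool) → ℝ) (β : ι → Lab Rw k q) (x : ι → Bool) : ℝ :=
  (∑ y, (sg (tst p (fun _ => false) 0 1 β x) - sg (tst p (fun _ => false) 0 1 β (xr x (pb β (sp y))))) ^ 2) +
  ∑ j : Rw, ∑ z : Fin k → Bool, ∑ y ∈ univ.filter (fun y : Rw × Fin k → Bool => ∀ t, y (j, t) = false),
    ((sg (tst p (rp j z) 1 (-(1 + cc d)) β x) -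
      sg (tst p (rp j z) 1 (-(1 + cc d)) β (xr x (pb β (sp y))))) ^ 2 +
     (sg (tst p (rp j z) (-1) (1 - cc d) β x) -
      sg (tst p (rp j z) (-1) (1 - cc d) β (xr x (pb β (sp y))))) ^ 2)

lemma Tsum_nonneg (d : ℕ) (p : (ι → Bool) → ℝ) (β : ι → Lab Rw k q) (x : ι → Bool) :
    0 ≤ Tsum d p β x := by
  unfold Tsum; positivity

lemma sg_ne_sq {a b : ℝ} (h : sg a ≠ sg b) : (sg a - sg b) ^ 2 = 4 := by
  rcases sg_cases a with h1 | h1 <;> rcases sg_cases b with h2 | h2 <;> rw [h1, h2] at h ⊢ <;>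
    first | (exact absurd rfl h) | norm_num

lemma Tsum_quiet (d : ℕ) (p : (ι → Bool) → ℝ) (β : ι → Lab Rw k q) (x : ι → Bool)
    (h : Tsum d p β x < 4) : Quiet d p x β := by
  have hA : 0 ≤ ∑ y, (sg (tst p (fun _ => false) 0 1 β x) -
      sg (tst p (fun _ => false) 0 1 β (xr x (pb β (sp y))))) ^ 2 := by positivity
  set G : Rw → (Fin k → Bool) → (Rw × Fin k → Bool) → ℝ := fun j z y =>
    ((sg (tst p (rp j z) 1 (-(1 + cc d)) β x) -
      sg (tst p (rp j z) 1 (-(1 + cc d)) β (xr x (pb β (sp y))))) ^ 2 +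
     (sg (tst p (rp j z) (-1) (1 - cc d) β x) -
      sg (tst p (rp j z) (-1) (1 - cc d) β (xr x (pb β (sp y))))) ^ 2) with hG
  have hG0 : ∀ j z y, 0 ≤ G j z y := fun j z y => by simp only [hG]; positivity
  have hB0 : 0 ≤ ∑ j : Rw, ∑ z : Fin k → Bool,
      ∑ y ∈ univ.filter (fun y : Rw × Fin k → Bool => ∀ t, y (j, t) = false), G j z y :=
    Finset.sum_nonneg fun j _ => Finset.sum_nonneg fun z _ => Finset.sum_nonneg fun y _ => hG0 j z y
  have hGle : ∀ j z y, (∀ t, y (j, t) = false) → G j z y < 4 := by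
    intro j z y hy
    have h1 : G j z y ≤ ∑ y ∈ univ.filter (fun y : Rw × Fin k → Bool => ∀ t, y (j, t) = false), G j z y :=
      Finset.single_le_sum (f := fun y => G j z y) (fun y _ => hG0 j z y) (by simpa using hy)
    have h2 : ∑ y ∈ univ.filter (fun y : Rw × Fin k → Bool => ∀ t, y (j, t) = false), G j z y ≤ 
        ∑ z, ∑ y ∈ univ.filter (fun y : Rw × Fin k → Bool => ∀ t, y (j, t) = false), G j z y :=
      Finset.single_le_sum (f := fun z => ∑ y ∈ univ.filter (fun y : Rw × Fin k → Bool => ∀ t, y (j, t) = false), G j z y)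
        (fun z _ => Finset.sum_nonneg fun y _ => hG0 j z y) (Finset.mem_univ z)
    have h3 : ∑ z, ∑ y ∈ univ.filter (fun y : Rw × Fin k → Bool => ∀ t, y (j, t) = false), G j z y ≤ 
        ∑ j, ∑ z, ∑ y ∈ univ.filter (fun y : Rw × Fin k → Bool => ∀ t, y (j, t) = false), G j z y :=
      Finset.single_le_sum (f := fun j => ∑ z, ∑ y ∈ univ.filter (fun y : Rw × Fin k → Bool => ∀ t, y (j, t) = false), G j z y)
        (fun j _ => Finset.sum_nonneg fun z _ => Finset.sum_nonneg fun y _ => hG0 j z y) (Finset.mem_univ j)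
    unfold Tsum at h
    linarith
  refine ⟨fun y => ?_, fun j z y hy => ?_, fun j z y hy => ?_⟩
  · by_contra hne
    have h1 : (sg (tst p (fun _ => false) 0 1 β x) -
      sg (tst p (fun _ => false) 0 1 β (xr x (pb β (sp y))))) ^ 2 ≤ 
      ∑ y, (sg (tst p (fun _ => false) 0 1 β x) -
      sg (tst p (fun _ => false) 0 1 β (xr x (pb β (sp y))))) ^ 2 :=
      Finset.single_le_sum (f := fun y => (sg (tst p (fun _ => false) 0 1 β x) -
      sg (tst p (fun _ => false) 0 1 β (xr x (pb β (sp y))))) ^ 2) (fun y _ => sq_nonneg _) (Finset.mem_univ y)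
    rw [sg_ne_sq (by simpa [tst] using hne)] at h1
    unfold Tsum at h
    linarith
  · by_contra hne
    have h1 := hGle j z y hy
    simp only [hG] at h1
    rw [sg_ne_sq hne] at h1
    linarith [sq_nonneg (sg (tst p (rp j z) (-1) (1 - cc d) β x) -
      sg (tst p (rp j z) (-1) (1 - cc d) β (xr x (pb β (sp y)))))]
  · by_contra hne
    have h1 := hGle j z y hy
    simp only [hG] at h1
    rw [sg_ne_sq hne] at h1
    linarith [sq_nonneg (sg (tst p (rp j z) 1 (-(1 + cc d)) β x) -
      sg (tst p (rp j z) 1 (-(1 + cc d)) β (xr x (pb β (sp y)))))]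

/-- number of tests -/
noncomputable def MM (Rw : Type) [Fintype Rw] (k : ℕ) : ℝ :=
  2 ^ Fintype.card (Rw × Fin k) + Fintype.card Rw * (2 ^ k * (2 ^ Fintype.card (Rw × Fin k) * 2))

lemma Tsum_av {d N : ℕ} {X : ℝ} (hH : H d N X) (hX : 0 ≤ X) (hq : 0 < q)
    (hB : Fintype.card (Lab Rw k q) ≤ N) {p : (ι → Bool) → ℝ} (hp : Deg d p) :
    av (fun β : ι → Lab Rw k q => av (fun x => Tsum d p β x)) * q ≤
      MM Rw k * (Fintype.card (Rw × Fin k) * (X * Real.sqrt (Fintype.card (Lab Rw k q)))) := by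
  set E : ℝ := Fintype.card (Rw × Fin k) * (X * Real.sqrt (Fintype.card (Lab Rw k q))) with hE
  have hE0 : 0 ≤ E := by positivity
  have h0 : av (fun β : ι → Lab Rw k q => av (fun x => Tsum d p β x)) =
      (∑ y : Rw × Fin k → Bool, EP p (fun _ => false) 0 1 (sp y : Lab Rw k q → Bool)) +
      ∑ j : Rw, ∑ z : Fin k → Bool, ∑ y ∈ univ.filter (fun y : Rw × Fin k → Bool => ∀ t, y (j, t) = false),
       (EP p (rp j z) 1 (-(1 + cc d)) (sp y : Lab Rw k q → Bool) +
        EP p (rp j z) (-1) (1 - cc d) (sp y : Lab Rw k q → Bool)) := by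
    simp only [Tsum, av_add, av_sum]
    rfl
  rw [h0, add_mul, Finset.sum_mul, Finset.sum_mul]
  simp only [Finset.sum_mul, add_mul]
  unfold MM
  rw [add_mul]
  apply add_le_add
  · calc _ ≤ ∑ y : Rw × Fin k → Bool, E := Finset.sum_le_sum fun y _ =>
          EP_sp hH hX hq hB hp _ _ _ (fun _ => rfl) y (fun _ _ => rfl)
      _ = _ := by simp
  · calc _ ≤ ∑ j : Rw, ∑ z : Fin k → Bool, ∑ y : Rw × Fin k → Bool, (E + E) := by
          refine Finset.sum_le_sum fun j _ => Finset.sum_le_sum fun z _ => ?_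
          refine le_trans (Finset.sum_le_sum (g := fun _ => E + E) fun y hy => ?_)
            (Finset.sum_le_sum_of_subset_of_nonneg (Finset.filter_subset _ _) fun _ _ _ => by positivity)
          have hy' : ∀ t, y (j, t) = false := by simpa using hy
          have hoff : ∀ w : Rw × Fin k, y w = true → (rp j z : Lab Rw k q → Bool) (Sum.inl w) = false := by
            rintro ⟨r, t⟩ hw
            by_cases hr : r = j
            · subst hr; rw [hy'] at hw; exact absurd hw (by simp)
            · simp [rp, sp, hr]
          exact add_le_add (EP_sp hH hX hq hB hp _ _ _ (fun _ => rfl) y hoff)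
            (EP_sp hH hX hq hB hp _ _ _ (fun _ => rfl) y hoff)
      _ = _ := by
        simp only [Finset.sum_const, Finset.card_univ, nsmul_eq_mul, Fintype.card_fun, Fintype.card_bool,
          Fintype.card_fin]
        push_cast
        ring

end Tail
end PTF

namespace PTF
section Tail2
variable {ι : Type} [Fintype ι] [DecidableEq ι]

lemma exp_count (T0 N0 q : ℕ) (hq : 0 < q) :
    Real.exp (-((T0 : ℝ) * N0)) * ((N0 + q : ℕ) : ℝ) ^ (T0 * q) ≤ (q : ℝ) ^ (T0 * q) := by
  have hq' : (0 : ℝ) < q := by exact_mod_cast hq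
  have h1 : ((N0 + q : ℕ) : ℝ) ≤ q * Real.exp (N0 / q) := by
    have := Real.add_one_le_exp ((N0 : ℝ) / q)
    calc ((N0 + q : ℕ) : ℝ) = q * (N0 / q + 1) := by push_cast; field_simp
      _ ≤ _ := by gcongr
  calc _ ≤ Real.exp (-((T0 : ℝ) * N0)) * (q * Real.exp (N0 / q)) ^ (T0 * q) := by gcongr
    _ = (q : ℝ) ^ (T0 * q) * (Real.exp (-((T0 : ℝ) * N0)) * Real.exp (N0 / q) ^ (T0 * q)) := by
      rw [mul_pow]; ring
    _ = _ := by
      rw [← Real.exp_nat_mul, ← Real.exp_add]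
      have : -((T0 : ℝ) * N0) + ((T0 * q : ℕ) : ℝ) * (N0 / q) = 0 := by
        push_cast; field_simp; ring
      rw [this]; simp

/-- many sensitive coordinates, with `p` positive -/
def Many (Rw : Type) (q : ℕ) (p : (ι → Bool) → ℝ) (x : ι → Bool) : Prop :=
  0 < p x ∧ ∃ e : Rw × Fin q → ι, Function.Injective e ∧ ∀ w, p (xr x (pt (e w))) < 0

lemma pointwise {d m q : ℕ} {p : (ι → Bool) → ℝ} (hp : Deg d p)
    (hm : (2 : ℝ) ^ (d + 1) * (1 / (1 + cc d)) ^ m < 1) (hq : 0 < q) (x : ι → Bool)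
    (hx : Many (Fin (d + 1) × Fin m) q p x) :
    4 * Real.exp (-(((Fintype.card (Fin (d + 1) × Fin m) : ℕ) : ℝ) *
      Fintype.card ((Fin (d + 1) × Fin m) × Fin (d + 1)))) ≤
      av (fun β : ι → Lab (Fin (d + 1) × Fin m) (d + 1) q => Tsum d p β x) := by
  obtain ⟨hx0, e, he, hs⟩ := hx
  have hne : Nonempty (Lab (Fin (d + 1) × Fin m) (d + 1) q) := ⟨Sum.inr ⟨0, hq⟩⟩
  have h1 := good_count hp x hx0 he hq hs
  have h2 := Free_card (k := d + 1) he
  set T0 := Fintype.card (Fin (d + 1) × Fin m) with hT0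
  set N0 := Fintype.card ((Fin (d + 1) × Fin m) × Fin (d + 1)) with hN0
  have hLab : Fintype.card (Lab (Fin (d + 1) × Fin m) (d + 1) q) = N0 + q := by
    exact (Fintype.card_sum).trans (by rw [Fintype.card_fin])
  have h3 := exp_count T0 N0 q hq
  set G := univ.filter (fun β : ι → Lab (Fin (d + 1) × Fin m) (d + 1) q => Good d p x β) with hG
  rw [hLab] at h2
  have hb : (0 : ℝ) < ((N0 + q : ℕ) : ℝ) := by exact_mod_cast (by omega : 0 < N0 + q)
  have h4 : Real.exp (-((T0 : ℝ) * N0)) * ((N0 + q : ℕ) : ℝ) ^ Fintype.card ι ≤ G.card := by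
    have h2' : ((Free (d + 1) e).card : ℝ) * ((N0 + q : ℕ) : ℝ) ^ (T0 * q) =
        (q : ℝ) ^ (T0 * q) * ((N0 + q : ℕ) : ℝ) ^ Fintype.card ι := by exact_mod_cast h2
    have h5 : Real.exp (-((T0 : ℝ) * N0)) * ((N0 + q : ℕ) : ℝ) ^ Fintype.card ι ≤ (Free (d + 1) e).card := by
      refine le_of_mul_le_mul_right ?_ (pow_pos hb (T0 * q))
      rw [h2']
      calc _ = (Real.exp (-((T0 : ℝ) * N0)) * ((N0 + q : ℕ) : ℝ) ^ (T0 * q)) * ((N0 + q : ℕ) : ℝ) ^ Fintype.card ι := by ring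
        _ ≤ _ := by gcongr
    exact h5.trans (by exact_mod_cast h1)
  have h5 : 4 * (G.card : ℝ) ≤ ∑ β : ι → Lab (Fin (d + 1) × Fin m) (d + 1) q, Tsum d p β x := by
    calc 4 * (G.card : ℝ) = ∑ β ∈ G, (4 : ℝ) := by simp [mul_comm]
      _ ≤ ∑ β ∈ G, Tsum d p β x := by
        refine Finset.sum_le_sum fun β hβ => ?_
        by_contra hlt
        exact det hp x hx0 β hm (Finset.mem_filter.mp hβ).2 (Tsum_quiet d p β x (not_le.mp hlt))
      _ ≤ _ := Finset.sum_le_sum_of_subset_of_nonneg (Finset.subset_univ _)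
        fun _ _ _ => Tsum_nonneg _ _ _ _
  unfold av
  rw [Fintype.card_fun, hLab, le_div_iff₀ (by push_cast at hb ⊢; positivity)]
  push_cast at h4 ⊢
  linarith

lemma tail_one {d m q N : ℕ} {X : ℝ} {p : (ι → Bool) → ℝ} (hp : Deg d p)
    (hm : (2 : ℝ) ^ (d + 1) * (1 / (1 + cc d)) ^ m < 1) (hq : 0 < q) (hH : H d N X) (hX : 0 ≤ X)
    (hB : Fintype.card ((Fin (d + 1) × Fin m) × Fin (d + 1)) + q ≤ N) :
    av (fun x : ι → Bool => if Many (Fin (d + 1) × Fin m) q p x then (1 : ℝ) else 0) *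
      (4 * Real.exp (-(((Fintype.card (Fin (d + 1) × Fin m) : ℕ) : ℝ) *
      Fintype.card ((Fin (d + 1) × Fin m) × Fin (d + 1))))) * Real.sqrt q ≤
      MM (Fin (d + 1) × Fin m) (d + 1) * (Fintype.card ((Fin (d + 1) × Fin m) × Fin (d + 1)) *
        (X * Real.sqrt (Fintype.card ((Fin (d + 1) × Fin m) × Fin (d + 1)) + 1))) := by
  have hLab : Fintype.card (Lab (Fin (d + 1) × Fin m) (d + 1) q) =
      Fintype.card ((Fin (d + 1) × Fin m) × Fin (d + 1)) + q := by
    exact (Fintype.card_sum).trans (by rw [Fintype.card_fin])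
  have h1 := Tsum_av hH hX hq (hLab.le.trans hB) hp
  rw [av_comm, hLab] at h1
  set N0 := Fintype.card ((Fin (d + 1) × Fin m) × Fin (d + 1)) with hN0
  set θ := 4 * Real.exp (-(((Fintype.card (Fin (d + 1) × Fin m) : ℕ) : ℝ) * N0)) with hθ
  have hM : 0 ≤ MM (Fin (d + 1) × Fin m) (d + 1) := by unfold MM; positivity
  have h2 : av (fun x : ι → Bool => if Many (Fin (d + 1) × Fin m) q p x then (1 : ℝ) else 0) * θ ≤
      av (fun x => av (fun β : ι → Lab (Fin (d + 1) × Fin m) (d + 1) q => Tsum d p β x)) := by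
    rw [mul_comm, ← av_mul_left]
    refine av_mono fun x => ?_
    split_ifs with h
    · rw [mul_one]; exact pointwise hp hm hq x h
    · rw [mul_zero]; exact av_nonneg fun β => Tsum_nonneg _ _ _ _
  have hq' : (0 : ℝ) < q := by exact_mod_cast hq
  have hsq : 0 < Real.sqrt q := Real.sqrt_pos.mpr hq'
  have h3 : Real.sqrt ((N0 + q : ℕ) : ℝ) ≤ Real.sqrt ((N0 : ℝ) + 1) * Real.sqrt q := by
    rw [← Real.sqrt_mul (by positivity)]
    apply Real.sqrt_le_sqrt
    have : (1 : ℝ) ≤ q := by exact_mod_cast hq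
    push_cast
    nlinarith [(Nat.cast_nonneg N0 : (0 : ℝ) ≤ N0)]
  refine le_of_mul_le_mul_right ?_ hsq
  calc _ = (av (fun x : ι → Bool => if Many (Fin (d + 1) × Fin m) q p x then (1 : ℝ) else 0) * θ) * q := by
        rw [mul_assoc, Real.mul_self_sqrt hq'.le]
    _ ≤ _ := mul_le_mul_of_nonneg_right h2 hq'.le
    _ ≤ _ := h1
    _ ≤ MM (Fin (d + 1) × Fin m) (d + 1) * (N0 * (X * (Real.sqrt ((N0 : ℝ) + 1) * Real.sqrt q))) := by
      gcongr
    _ = _ := by ring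

/-- sensitivity of the sign of `p` -/
noncomputable def sn (p : (ι → Bool) → ℝ) (x : ι → Bool) : ℕ :=
  (univ.filter (fun i => p (xr x (pt i)) * p x < 0)).card

lemma many_of_sn {Rw : Type} [Fintype Rw] (q : ℕ) (p : (ι → Bool) → ℝ) (x : ι → Bool)
    (h : Fintype.card Rw * q ≤ sn p x) (hx : 0 < p x) : Many Rw q p x := by
  have h1 : Fintype.card (Rw × Fin q) ≤
      Fintype.card (univ.filter (fun i => p (xr x (pt i)) * p x < 0) : Finset ι) := by
    rw [Fintype.card_coe, Fintype.card_prod, Fintype.card_fin]; exact h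
  have h2 := Function.Embedding.nonempty_of_card_le h1
  obtain ⟨e⟩ := h2
  refine ⟨hx, fun w => (e w).1, fun a b hab => e.injective (Subtype.ext hab), fun w => ?_⟩
  have := (Finset.mem_filter.mp (e w).2).2
  by_contra hn
  exact absurd this (not_lt.mpr (mul_nonneg (not_lt.mp hn) hx.le))

lemma sn_neg (p : (ι → Bool) → ℝ) (x : ι → Bool) : sn (fun x => - p x) x = sn p x := by
  simp [sn]

lemma Deg_neg {d : ℕ} {p : (ι → Bool) → ℝ} (hp : Deg d p) : Deg d (fun x => - p x) := by
  have := hp.comb hp (-1) 0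
  simpa using this

end Tail2

theorem tail (d : ℕ) : ∃ (C : ℝ) (N0 : ℕ), 0 < C ∧
    ∀ (ι : Type) [Fintype ι] [DecidableEq ι] (p : (ι → Bool) → ℝ), Deg d p → (∀ x, p x ≠ 0) →
    ∀ X : ℝ, 1 ≤ X → H d (Fintype.card ι + N0) X → ∀ s : ℕ, 1 ≤ s → s ≤ Fintype.card ι →
      av (fun x : ι → Bool => if s ≤ sn p x then (1 : ℝ) else 0) ≤ C * X / Real.sqrt s := by
  obtain ⟨m, hm⟩ : ∃ m : ℕ, (2 : ℝ) ^ (d + 1) * (1 / (1 + cc d)) ^ m < 1 := by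
    have hc := cc_pos d
    obtain ⟨m, hm⟩ := exists_pow_lt_of_lt_one (show (0 : ℝ) < 1 / 2 ^ (d + 1) by positivity)
      (show 1 / (1 + cc d) < 1 by rw [div_lt_one (by linarith)]; linarith)
    refine ⟨m, ?_⟩
    rw [lt_div_iff₀ (by positivity)] at hm
    linarith
  set T0 := Fintype.card (Fin (d + 1) × Fin m) with hT0
  set N0 := Fintype.card ((Fin (d + 1) × Fin m) × Fin (d + 1)) with hN0
  set θ := 4 * Real.exp (-((T0 : ℝ) * N0)) with hθ
  have hθ0 : 0 < θ := by positivity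
  set K := MM (Fin (d + 1) × Fin m) (d + 1) * (N0 * Real.sqrt (N0 + 1)) / θ with hK
  have hM : 0 ≤ MM (Fin (d + 1) × Fin m) (d + 1) := by unfold MM; positivity
  have hK0 : 0 ≤ K := by positivity
  have hm0 : 0 < m := by
    rcases Nat.eq_zero_or_pos m with h | h
    · subst h
      have : (1 : ℝ) ≤ 2 ^ (d + 1) := one_le_pow₀ (by norm_num)
      rw [pow_zero, mul_one] at hm; linarith
    · exact h
  have hT0pos : 0 < T0 := by
    rw [hT0, Fintype.card_prod, Fintype.card_fin, Fintype.card_fin]; positivity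
  have hT0r : (0 : ℝ) < T0 := by exact_mod_cast hT0pos
  refine ⟨2 * K * Real.sqrt (2 * T0) + Real.sqrt T0, N0, by positivity, ?_⟩
  intro ι _ _ p hp hp0 X hX hH s hs hsn
  have hs0 : (0 : ℝ) < s := by exact_mod_cast hs
  have hss : 0 < Real.sqrt s := Real.sqrt_pos.mpr hs0
  have hX0 : 0 ≤ X := by linarith
  rw [le_div_iff₀ hss]
  by_cases hsT : s < T0
  · have h1 : av (fun x : ι → Bool => if s ≤ sn p x then (1 : ℝ) else 0) ≤ 1 := by
      refine (av_mono (ψ := fun _ => 1) fun x => ?_).trans (av_const _).le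
      split_ifs <;> norm_num
    have h2 : Real.sqrt s ≤ Real.sqrt T0 := Real.sqrt_le_sqrt (by exact_mod_cast hsT.le)
    have h3 : 0 ≤ 2 * K * Real.sqrt (2 * T0) := by positivity
    calc _ ≤ 1 * Real.sqrt T0 := by gcongr
      _ ≤ (2 * K * Real.sqrt (2 * T0) + Real.sqrt T0) * 1 := by linarith
      _ ≤ _ := by gcongr
  · push Not at hsT
    set q := s / T0 with hq
    have hq0 : 0 < q := Nat.div_pos hsT hT0pos
    have hq1 : T0 * q ≤ s := Nat.mul_div_le s T0
    have hq2 : s ≤ 2 * T0 * q := by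
      have := Nat.lt_mul_div_succ s hT0pos
      rw [← hq] at this
      nlinarith
    have hqs : q ≤ s := Nat.div_le_self _ _
    have hqr : (0 : ℝ) < q := by exact_mod_cast hq0
    have hsq : 0 < Real.sqrt q := Real.sqrt_pos.mpr hqr
    have hB : N0 + q ≤ Fintype.card ι + N0 := by omega
    have key : ∀ p' : (ι → Bool) → ℝ, Deg d p' →
        av (fun x : ι → Bool => if Many (Fin (d + 1) × Fin m) q p' x then (1 : ℝ) else 0) * Real.sqrt q ≤ K * X := by
      intro p' hp'
      have := tail_one hp' hm hq0 hH hX0 hB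
      rw [← hT0, ← hN0, ← hθ] at this
      refine le_of_mul_le_mul_right ?_ hθ0
      calc _ = _ := by ring
        _ ≤ _ := this
        _ = (K * θ) * X := by rw [hK, div_mul_cancel₀ _ hθ0.ne']; ring
        _ = _ := by ring
    have k1 := key p hp
    have k2 := key _ (Deg_neg hp)
    have h1 : av (fun x : ι → Bool => if s ≤ sn p x then (1 : ℝ) else 0) ≤
        av (fun x : ι → Bool => if Many (Fin (d + 1) × Fin m) q p x then (1 : ℝ) else 0) +
        av (fun x : ι → Bool => if Many (Fin (d + 1) × Fin m) q (fun x => - p x) x then (1 : ℝ) else 0) := by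
      rw [← av_add]
      refine av_mono fun x => ?_
      by_cases hx : s ≤ sn p x
      · rcases lt_or_gt_of_ne (hp0 x) with h | h
        · have : Many (Fin (d + 1) × Fin m) q (fun x => - p x) x :=
            many_of_sn q _ x (by rw [sn_neg]; exact hq1.trans hx) (by simpa using h)
          rw [if_pos hx, if_pos this]
          split_ifs <;> norm_num
        · have : Many (Fin (d + 1) × Fin m) q p x := many_of_sn q _ x (hq1.trans hx) h
          rw [if_pos hx, if_pos this]
          split_ifs <;> norm_num
      · rw [if_neg hx]; split_ifs <;> norm_num
    have h2 : Real.sqrt s ≤ Real.sqrt (2 * T0) * Real.sqrt q := by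
      rw [← Real.sqrt_mul (by positivity)]
      exact Real.sqrt_le_sqrt (by exact_mod_cast hq2)
    have h0 : 0 ≤ av (fun x : ι → Bool => if s ≤ sn p x then (1 : ℝ) else 0) :=
      av_nonneg fun x => by split_ifs <;> norm_num
    calc _ ≤ av (fun x : ι → Bool => if s ≤ sn p x then (1 : ℝ) else 0) * (Real.sqrt (2 * T0) * Real.sqrt q) := by gcongr
      _ = (av (fun x : ι → Bool => if s ≤ sn p x then (1 : ℝ) else 0) * Real.sqrt q) * Real.sqrt (2 * T0) := by ring
      _ ≤ (2 * (K * X)) * Real.sqrt (2 * T0) := by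
        refine mul_le_mul_of_nonneg_right ?_ (Real.sqrt_nonneg _)
        have := mul_le_mul_of_nonneg_right h1 hsq.le
        rw [add_mul] at this
        linarith
      _ ≤ _ := by
        have : 0 ≤ Real.sqrt T0 * X := by positivity
        nlinarith

end PTF

namespace PTF

lemma sqrt_sum_aux (s : ℕ) : Real.sqrt s ≤ ∑ m ∈ Finset.range s, 1 / Real.sqrt ((m + 1 : ℕ) : ℝ) := by
  induction s with
  | zero => simp
  | succ s ih =>
    rw [Finset.sum_range_succ]
    have h1 : 0 < Real.sqrt ((s + 1 : ℕ) : ℝ) := Real.sqrt_pos.mpr (by positivity)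
    have h2 : Real.sqrt ((s + 1 : ℕ) : ℝ) ≤ Real.sqrt s + 1 / Real.sqrt ((s + 1 : ℕ) : ℝ) := by
      refine le_of_mul_le_mul_right ?_ h1
      rw [add_mul, one_div, inv_mul_cancel₀ h1.ne', Real.mul_self_sqrt (by positivity)]
      have h3 : Real.sqrt s ≤ Real.sqrt ((s + 1 : ℕ) : ℝ) := Real.sqrt_le_sqrt (by push_cast; linarith)
      have h4 := Real.mul_self_sqrt (Nat.cast_nonneg s : (0 : ℝ) ≤ s)
      have h5 := mul_le_mul_of_nonneg_left h3 (Real.sqrt_nonneg s)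
      push_cast at *
      linarith
    linarith

lemma sqrt_sum (s n : ℕ) (h : s ≤ n) : Real.sqrt s ≤
    ∑ m ∈ Finset.range n, 1 / Real.sqrt ((m + 1 : ℕ) : ℝ) * (if m + 1 ≤ s then (1 : ℝ) else 0) := by
  refine (sqrt_sum_aux s).trans ?_
  calc _ = ∑ m ∈ Finset.range s, 1 / Real.sqrt ((m + 1 : ℕ) : ℝ) * (if m + 1 ≤ s then (1 : ℝ) else 0) := by
        refine Finset.sum_congr rfl fun m hm => ?_
        rw [if_pos (show m + 1 ≤ s from Finset.mem_range.mp hm), mul_one]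
    _ ≤ _ := Finset.sum_le_sum_of_subset_of_nonneg (Finset.range_mono h) fun _ _ _ => by positivity

lemma sn_le {ι : Type} [Fintype ι] [DecidableEq ι] (p : (ι → Bool) → ℝ) (x : ι → Bool) :
    sn p x ≤ Fintype.card ι := Finset.card_le_univ _

theorem surf (d : ℕ) : ∃ (C : ℝ) (N0 : ℕ), 0 < C ∧
    ∀ (ι : Type) [Fintype ι] [DecidableEq ι] (p : (ι → Bool) → ℝ), Deg d p → (∀ x, p x ≠ 0) →
    ∀ X : ℝ, 1 ≤ X → H d (Fintype.card ι + N0) X →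
      av (fun x : ι → Bool => Real.sqrt (sn p x)) ≤ C * X * (1 + Real.log (Fintype.card ι)) := by
  obtain ⟨C, N0, hC, h⟩ := tail d
  refine ⟨C, N0, hC, ?_⟩
  intro ι _ _ p hp hp0 X hX hH
  set n := Fintype.card ι with hn
  calc _ ≤ av (fun x : ι → Bool => ∑ m ∈ Finset.range n, 1 / Real.sqrt ((m + 1 : ℕ) : ℝ) *
          (if m + 1 ≤ sn p x then (1 : ℝ) else 0)) := av_mono fun x => sqrt_sum _ _ (sn_le p x)
    _ = ∑ m ∈ Finset.range n, 1 / Real.sqrt ((m + 1 : ℕ) : ℝ) *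
          av (fun x : ι → Bool => if m + 1 ≤ sn p x then (1 : ℝ) else 0) := by
      rw [av_sum]
      exact Finset.sum_congr rfl fun m _ => av_mul_left _ _
    _ ≤ ∑ m ∈ Finset.range n, 1 / Real.sqrt ((m + 1 : ℕ) : ℝ) * (C * X / Real.sqrt ((m + 1 : ℕ) : ℝ)) := by
      refine Finset.sum_le_sum fun m hm => ?_
      refine mul_le_mul_of_nonneg_left ?_ (by positivity)
      exact h ι p hp hp0 X hX hH (m + 1) (by omega) (Finset.mem_range.mp hm)
    _ = C * X * ((harmonic n : ℚ) : ℝ) := by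
      unfold harmonic
      push_cast
      rw [Finset.mul_sum]
      refine Finset.sum_congr rfl fun m _ => ?_
      have h1 : (0 : ℝ) < (m : ℝ) + 1 := by positivity
      rw [div_mul_div_comm, Real.mul_self_sqrt h1.le]
      ring
    _ ≤ _ := by
      refine mul_le_mul_of_nonneg_left ?_ (by nlinarith)
      exact harmonic_le_one_add_log n

lemma par_flip {k : ℕ} (z : Fin k → Bool) (t : Fin k) : par (xr z (pt t)) = - par z := by
  unfold par
  rw [← Finset.mul_prod_erase univ _ (Finset.mem_univ t),
    ← Finset.mul_prod_erase univ (fun s => chi (z s)) (Finset.mem_univ t), xr_pt_same, chi_not, neg_mul]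
  congr 2
  refine Finset.prod_congr rfl fun s hs => ?_
  rw [xr_pt_ne z (Finset.ne_of_mem_erase hs)]

lemma Deg_of_few {ι : Type} {d : ℕ} (g : (ι → Bool) → ℝ) (S : Finset ι) (hS : S.card ≤ d)
    (hg : ∀ x y : ι → Bool, (∀ i ∈ S, x i = y i) → g x = g y) : Deg d g := by
  intro β x
  obtain ⟨t, ht⟩ : ∃ t : Fin (d + 1), ∀ i ∈ S, β i ≠ some t := by
    by_contra hcon
    push Not at hcon
    have h1 : (univ : Finset (Fin (d + 1))).image some ⊆ S.image β := by
      intro o ho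
      obtain ⟨t, _, rfl⟩ := Finset.mem_image.mp ho
      obtain ⟨i, hi, hit⟩ := hcon t
      exact Finset.mem_image.mpr ⟨i, hi, hit⟩
    have h2 := (Finset.card_le_card h1).trans Finset.card_image_le
    rw [Finset.card_image_of_injective _ (Option.some_injective _), Finset.card_univ, Fintype.card_fin] at h2
    omega
  have h1 := (xrE (pt t : Fin (d + 1) → Bool)).sum_comp
    (fun z => par z * g (xr x (pb β (ex z))))
  have h2 : ∀ z : Fin (d + 1) → Bool, par (xrE (pt t) z) * g (xr x (pb β (ex (xrE (pt t) z)))) =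
      - (par z * g (xr x (pb β (ex z)))) := by
    intro z
    have h3 : g (xr x (pb β (ex (xrE (pt t) z)))) = g (xr x (pb β (ex z))) := by
      refine hg _ _ fun i hi => ?_
      have := ht i hi
      simp only [xr, pb]
      congr 1
      rcases hβ : β i with _ | s
      · rfl
      · have hst : s ≠ t := fun h => this (by rw [hβ, h])
        exact xr_pt_ne z hst
    rw [h3]
    have : par (xrE (pt t) z) = - par z := par_flip z t
    rw [this]; ring
  simp only [h2, Finset.sum_neg_distrib] at h1
  linarith

lemma Deg_sum {ι κ : Type} {d : ℕ} (s : Finset κ) (c : κ → ℝ) (g : κ → (ι → Bool) → ℝ)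
    (hg : ∀ k ∈ s, Deg d (g k)) : Deg d (fun x => ∑ k ∈ s, c k * g k x) := by
  intro β x
  simp only [Finset.mul_sum]
  rw [Finset.sum_comm]
  refine Finset.sum_eq_zero fun k hk => ?_
  calc _ = c k * ∑ z : Fin (d + 1) → Bool, par z * g k (xr x (pb β (ex z))) := by
        rw [Finset.mul_sum]; exact Finset.sum_congr rfl fun z _ => by ring
    _ = 0 := by rw [hg k hk β x, mul_zero]

lemma Deg_pev {d n : ℕ} (p : MvPolynomial (Fin n) ℝ) (hp : p.totalDegree ≤ d) : Deg d (pev p) := by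
  have h1 : pev p = fun x => ∑ m ∈ p.support, p.coeff m * ∏ i ∈ m.support, chi (x i) ^ m i := by
    funext x
    unfold pev
    rw [MvPolynomial.eval_eq]
  rw [h1]
  refine Deg_sum _ _ _ fun m hm => ?_
  refine Deg_of_few _ m.support ?_ fun x y hxy => ?_
  · refine le_trans ?_ ((MvPolynomial.le_totalDegree hm).trans hp)
    rw [Finset.card_eq_sum_ones]
    exact Finset.sum_le_sum fun i hi => Nat.one_le_iff_ne_zero.mpr (Finsupp.mem_support_iff.mp hi)
  · exact Finset.prod_congr rfl fun i hi => by rw [hxy i hi]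

lemma flipAt_eq {n : ℕ} (x : Fin n → Bool) (i : Fin n) : flipAt x i = xr x (pt i) := by
  funext j
  by_cases h : j = i
  · subst h; rw [xr_pt_same]; simp [flipAt]
  · rw [xr_pt_ne x h]; simp [flipAt, h]

lemma sens_eq {n : ℕ} {f p : (Fin n → Bool) → ℝ} (h : ∀ x, p x ≠ 0 ∧ f x = Real.sign (p x))
    (x : Fin n → Bool) : sens f x = sn p x := by
  unfold sens sn
  congr 1
  ext i
  simp only [Finset.mem_filter, Finset.mem_univ, true_and, flipAt_eq, (h _).2]
  rcases lt_or_gt_of_ne (h x).1 with h1 | h1 <;> rcases lt_or_gt_of_ne (h (xr x (pt i))).1 with h2 | h2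
  · rw [Real.sign_of_neg h1, Real.sign_of_neg h2]
    simp [(mul_pos_of_neg_of_neg h2 h1).le]
  · rw [Real.sign_of_neg h1, Real.sign_of_pos h2]
    simp only [mul_neg_of_pos_of_neg h2 h1, iff_true]; norm_num
  · rw [Real.sign_of_pos h1, Real.sign_of_neg h2]
    simp only [mul_neg_of_neg_of_pos h2 h1, iff_true]; norm_num
  · rw [Real.sign_of_pos h1, Real.sign_of_pos h2]
    simp [(mul_pos h2 h1).le]

lemma natlog_bound (n N0 : ℕ) (hn : 1 ≤ n) :
    ((Nat.log 2 (n + N0) + 1 : ℕ) : ℝ) ≤ (N0 + 4) * (1 + Real.log n) := by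
  have hn' : (1 : ℝ) ≤ n := by exact_mod_cast hn
  have hl : 0 ≤ Real.log n := Real.log_nonneg hn'
  have h1 : ((Nat.log 2 (n + N0) : ℕ) : ℝ) ≤ Real.logb 2 ((n + N0 : ℕ) : ℝ) := by
    exact_mod_cast Real.natLog_le_logb (n + N0) 2
  have h2 : Real.logb 2 ((n + N0 : ℕ) : ℝ) ≤ 2 * Real.log ((n + N0 : ℕ) : ℝ) := by
    unfold Real.logb
    have h3 : 0 ≤ Real.log ((n + N0 : ℕ) : ℝ) := Real.log_natCast_nonneg _
    have h4 := Real.log_two_gt_d9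
    rw [div_le_iff₀ (by linarith)]
    nlinarith
  have h3 : Real.log ((n + N0 : ℕ) : ℝ) ≤ Real.log n + Real.log (1 + N0) := by
    rw [← Real.log_mul (by positivity) (by positivity)]
    apply Real.log_le_log (by push_cast; positivity)
    push_cast
    nlinarith [(Nat.cast_nonneg N0 : (0 : ℝ) ≤ N0)]
  have h4 : Real.log (1 + (N0 : ℝ)) ≤ (N0 + 1) / 2 := by
    have h5 := Real.log_le_sub_one_of_pos (show (0 : ℝ) < (1 + N0) / 2 by positivity)
    rw [Real.log_div (by positivity) (by norm_num)] at h5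
    have := Real.log_two_lt_d9
    linarith
  push_cast at *
  nlinarith [mul_nonneg (Nat.cast_nonneg N0 : (0 : ℝ) ≤ N0) hl]

end PTF

/-- Every degree-`d` PTF has polylogarithmic Boolean surface area. -/
theorem bsa_ptf_polylog (d : ℕ) (hd : 1 ≤ d) :
    ∃ C : ℝ, 0 < C ∧ ∀ n : ℕ, 1 ≤ n → ∀ f : (Fin n → Bool) → ℝ, IsPTF d f →
      BSA f ≤ C * Real.log (Real.exp 1 * n) ^ C := by
  obtain ⟨C, N0, hC, h⟩ := PTF.surf d
  set K : ℝ := C * (24 * (N0 + 4) ^ 2) ^ d with hK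
  have hK0 : 0 < K := by positivity
  refine ⟨max K (2 * d + 1 : ℕ), lt_max_of_lt_left hK0, ?_⟩
  rintro n hn f ⟨p, -, hpd, hp⟩
  have hn' : (1 : ℝ) ≤ n := by exact_mod_cast hn
  have hlog : Real.log (Real.exp 1 * n) = 1 + Real.log n := by
    rw [Real.log_mul (Real.exp_pos 1).ne' (by positivity), Real.log_exp]
  set L := 1 + Real.log n with hL
  have hL1 : 1 ≤ L := by have := Real.log_nonneg hn'; linarith
  set M : ℝ := ((Nat.log 2 (n + N0) + 1 : ℕ) : ℝ) with hM
  have hM1 : 1 ≤ M := by rw [hM]; exact_mod_cast Nat.le_add_left 1 _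
  have hML : M ≤ (N0 + 4) * L := PTF.natlog_bound n N0 hn
  have hX1 : 1 ≤ (24 * M ^ 2) ^ d := one_le_pow₀ (by nlinarith)
  have h1 := h (Fin n) (pev p) (PTF.Deg_pev p hpd) (fun x => (hp x).1) ((24 * M ^ 2) ^ d) hX1
    (by rw [Fintype.card_fin]; exact PTF.H_main d (n + N0))
  rw [Fintype.card_fin] at h1
  have h2 : BSA f = PTF.av (fun x : Fin n → Bool => Real.sqrt (PTF.sn (pev p) x)) := by
    unfold BSA PTF.av
    rw [Fintype.card_fun, Fintype.card_bool, Fintype.card_fin]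
    push_cast
    congr 1
    exact Finset.sum_congr rfl fun x _ => by rw [PTF.sens_eq hp x]
  rw [h2, hlog]
  calc _ ≤ _ := h1
    _ ≤ C * (24 * ((N0 + 4) * L) ^ 2) ^ d * L := by gcongr
    _ = K * L ^ (2 * d + 1) := by
      rw [hK, mul_pow ((N0 : ℝ) + 4) L 2, ← mul_assoc, mul_pow (24 * ((N0 : ℝ) + 4) ^ 2), ← pow_mul, pow_succ]
      ring
    _ = K * L ^ (((2 * d + 1 : ℕ) : ℝ)) := by rw [Real.rpow_natCast]
    _ ≤ _ := by
      gcongr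
      · exact le_max_left _ _
      · exact le_max_right _ _
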